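/- arXiv:2412.00995 — 2 statements merged into one kernel-verified Lean document; each statement's English description precedes it below -/
import Mathlib

section
/- There is an absolute constant C such that the following holds for every prime p, every integer k ≥ 1, every unit u ∈ ℤ_p^×, and every integer 0 ≤ ℓ ≤ 2k. Writing ν_a(χ_{p^{2k}}) for the Haar probability measure in V_a(ℤ_p) of {f ∈ V_a(ℤ_p) : p^{2k} ∣ Δ(f)}: ν_u(χ_{p²}) ≤ C p^{−2}; ν_{up}(χ_{p²}) ≤ C p^{−2}; ν_{up²}(χ_{p²}) ≤ C p^{−1}; ν_{up^ℓ}(χ_{p⁴}) ≤ C p^{−(4−ℓ)}; and for k ≥ 3, ν_{up^ℓ}(χ_{p^{2k}}) ≤ C min(k p^{ℓ−3k/2}, 1). -/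
noncomputable section

namespace BQPaper

/-- A binary quartic form `a x⁴ + b x³y + c x²y² + d xy³ + e y⁴` over `R`,
recorded by its coefficients. -/
structure BQ (R : Type*) where
  a : R
  b : R
  c : R
  d : R
  e : R

/-- A 2×2 matrix `!![p, q; r, s]`, recorded by its entries. -/
structure Mat2 (R : Type*) where
  p : R
  q : R
  r : R
  s : R

variable {R S : Type*} [CommRing R] [CommRing S]

def Mat2.det (m : Mat2 R) : R := m.p * m.s - m.q * m.r

/-- Matrix product. -/
def Mat2.mul (m n : Mat2 R) : Mat2 R :=
  ⟨m.p * n.p + m.q * n.r, m.p * n.q + m.q * n.s,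
   m.r * n.p + m.s * n.r, m.r * n.q + m.s * n.s⟩

/-- Scalar multiple of a matrix. -/
def Mat2.smul (z : R) (m : Mat2 R) : Mat2 R := ⟨z * m.p, z * m.q, z * m.r, z * m.s⟩

def Mat2.map (φ : R →+* S) (m : Mat2 R) : Mat2 S := ⟨φ m.p, φ m.q, φ m.r, φ m.s⟩

/-- Evaluation of a binary quartic form at `(x, y)`. -/
def BQ.eval (f : BQ R) (x y : R) : R :=
  f.a * x ^ 4 + f.b * x ^ 3 * y + f.c * x ^ 2 * y ^ 2 + f.d * x * y ^ 3 + f.e * y ^ 4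

/-- The invariant `I(f) = 12ae − 3bd + c²`. -/
def BQ.invI (f : BQ R) : R := 12 * f.a * f.e - 3 * f.b * f.d + f.c ^ 2

/-- The invariant `J(f) = 72ace + 9bcd − 27ad² − 27eb² − 2c³`. -/
def BQ.invJ (f : BQ R) : R :=
  72 * f.a * f.c * f.e + 9 * f.b * f.c * f.d - 27 * f.a * f.d ^ 2
    - 27 * f.e * f.b ^ 2 - 2 * f.c ^ 3

/-- The discriminant of a binary quartic form; one has `Δ = (4I³ − J²)/27`. -/
def BQ.disc (f : BQ R) : R :=
  256 * f.a ^ 3 * f.e ^ 3 - 192 * f.a ^ 2 * f.b * f.d * f.e ^ 2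
    - 128 * f.a ^ 2 * f.c ^ 2 * f.e ^ 2 + 144 * f.a ^ 2 * f.c * f.d ^ 2 * f.e
    - 27 * f.a ^ 2 * f.d ^ 4 + 144 * f.a * f.b ^ 2 * f.c * f.e ^ 2
    - 6 * f.a * f.b ^ 2 * f.d ^ 2 * f.e - 80 * f.a * f.b * f.c ^ 2 * f.d * f.e
    + 18 * f.a * f.b * f.c * f.d ^ 3 + 16 * f.a * f.c ^ 4 * f.e
    - 4 * f.a * f.c ^ 3 * f.d ^ 2 - 27 * f.b ^ 4 * f.e ^ 2
    + 18 * f.b ^ 3 * f.c * f.d * f.e - 4 * f.b ^ 3 * f.d ^ 3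
    - 4 * f.b ^ 2 * f.c ^ 3 * f.e + f.b ^ 2 * f.c ^ 2 * f.d ^ 2

/-- Multiplication of all coefficients of a form by a scalar. -/
def BQ.rsmul (t : R) (f : BQ R) : BQ R := ⟨t * f.a, t * f.b, t * f.c, t * f.d, t * f.e⟩

/-- Substitution action of a 2×2 matrix on binary quartic forms:
`(m • f)(x,y) = f((x,y)·m) = f(px + ry, qx + sy)` for `m = !![p, q; r, s]`. -/
def BQ.subst (m : Mat2 R) (f : BQ R) : BQ R where
  a := f.a * m.p ^ 4 + f.b * m.p ^ 3 * m.q + f.c * m.p ^ 2 * m.q ^ 2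
      + f.d * m.p * m.q ^ 3 + f.e * m.q ^ 4
  b := 4 * f.a * m.p ^ 3 * m.r + f.b * m.p ^ 3 * m.s + 3 * f.b * m.p ^ 2 * m.q * m.r
      + 2 * f.c * m.p ^ 2 * m.q * m.s + 2 * f.c * m.p * m.q ^ 2 * m.r
      + 3 * f.d * m.p * m.q ^ 2 * m.s + f.d * m.q ^ 3 * m.r + 4 * f.e * m.q ^ 3 * m.s
  c := 6 * f.a * m.p ^ 2 * m.r ^ 2 + 3 * f.b * m.p ^ 2 * m.r * m.s
      + 3 * f.b * m.p * m.q * m.r ^ 2 + f.c * m.p ^ 2 * m.s ^ 2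
      + 4 * f.c * m.p * m.q * m.r * m.s + f.c * m.q ^ 2 * m.r ^ 2
      + 3 * f.d * m.p * m.q * m.s ^ 2 + 3 * f.d * m.q ^ 2 * m.r * m.s
      + 6 * f.e * m.q ^ 2 * m.s ^ 2
  d := 4 * f.a * m.p * m.r ^ 3 + 3 * f.b * m.p * m.r ^ 2 * m.s + f.b * m.q * m.r ^ 3
      + 2 * f.c * m.p * m.r * m.s ^ 2 + 2 * f.c * m.q * m.r ^ 2 * m.s
      + f.d * m.p * m.s ^ 3 + 3 * f.d * m.q * m.r * m.s ^ 2 + 4 * f.e * m.q * m.s ^ 3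
  e := f.a * m.r ^ 4 + f.b * m.r ^ 3 * m.s + f.c * m.r ^ 2 * m.s ^ 2
      + f.d * m.r * m.s ^ 3 + f.e * m.s ^ 4

/-- The twisted action `(γ·f)(x,y) = f((x,y)·γ)/det(γ)²`, which descends to `PGL₂`.
(`Ring.inverse` is the genuine inverse when `det` is a unit.) -/
def BQ.twist (m : Mat2 R) (f : BQ R) : BQ R :=
  BQ.rsmul (Ring.inverse m.det ^ 2) (f.subst m)

/-- Coefficientwise map of forms along a ring homomorphism. -/
def BQ.map (φ : R →+* S) (f : BQ R) : BQ S := ⟨φ f.a, φ f.b, φ f.c, φ f.d, φ f.e⟩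

end BQPaper

namespace BQPaper

open MeasureTheory

instance (p : Nat.Primes) : Fact (p : ℕ).Prime := ⟨p.2⟩

noncomputable instance (p : ℕ) [Fact p.Prime] : MeasurableSpace ℤ_[p] := borel _
instance (p : ℕ) [Fact p.Prime] : BorelSpace ℤ_[p] := ⟨rfl⟩

/-- A binary quartic form with leading coefficient `a` and remaining coefficients
given by a vector: an element of `V_a(ℤ_p) ≅ ℤ_p⁴`. -/
def ofVecA {R : Type*} (a : R) (v : Fin 4 → R) : BQ R := ⟨a, v 0, v 1, v 2, v 3⟩

/-- The subset of `V_a(ℤ_p) ≅ ℤ_p⁴` of forms whose discriminant is divisible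
by `p^j`. -/
def discDivSetA (p : Nat.Primes) (a : ℤ_[(p : ℕ)]) (j : ℕ) : Set (Fin 4 → ℤ_[(p : ℕ)]) :=
  {v | ((p : ℕ) : ℤ_[(p : ℕ)]) ^ j ∣ (ofVecA a v).disc}

section helpers
open Set

section basics
variable (p : ℕ) [hp : Fact p.Prime]

instance secondCountZp : SecondCountableTopology ℤ_[p] := inferInstance

/-- Haar probability measure on `ℤ_p`. -/
noncomputable def mu : Measure ℤ_[p] := Measure.addHaarMeasure ⊤

instance mu_haar : (mu p).IsAddHaarMeasure := by unfold mu; infer_instance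

instance mu_prob : IsProbabilityMeasure (mu p) := ⟨by
  have := Measure.addHaarMeasure_self (K₀ := (⊤ : TopologicalSpace.PositiveCompacts ℤ_[p]))
  simpa [mu] using this⟩

lemma mu_pow_ball (n : ℕ) :
    mu p {x | ‖x‖ ≤ (p : ℝ) ^ (-n : ℤ)} = ENNReal.ofReal ((p : ℝ) ^ (-n : ℤ)) := by
  let H : AddSubgroup ℤ_[p] := (PadicInt.toZModPow (p := p) n).toAddMonoidHom.ker
  have hH : (H : Set ℤ_[p]) = {x | ‖x‖ ≤ (p : ℝ) ^ (-n : ℤ)} := by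
    ext x
    simp only [mem_ofPred_eq]
    rw [PadicInt.norm_le_pow_iff_mem_span_pow, ← PadicInt.ker_toZModPow]
    rfl
  have hidx : H.index = p ^ n := by
    have h1 := AddSubgroup.index_ker (PadicInt.toZModPow (p := p) n).toAddMonoidHom
    have h2 : (PadicInt.toZModPow (p := p) n).toAddMonoidHom.range = ⊤ := by
      rw [AddMonoidHom.range_eq_top]
      exact ZMod.ringHom_surjective (PadicInt.toZModPow (p := p) n)
    rw [h2] at h1
    rw [show H.index = _ from h1]
    simp
  have hpn : (p ^ n : ℕ) ≠ 0 := pow_ne_zero _ hp.out.ne_zero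
  have : H.FiniteIndex := ⟨by rw [hidx]; exact hpn⟩
  have hc : IsClosed {x : ℤ_[p] | ‖x‖ ≤ (p : ℝ) ^ (-n : ℤ)} :=
    isClosed_le continuous_norm continuous_const
  have := AddSubgroup.index_mul_measure H (by rw [hH]; exact hc.measurableSet) (mu p)
  rw [hH, hidx, measure_univ] at this
  have h3 := ENNReal.eq_inv_of_mul_eq_one_left (by rw [mul_comm]; exact this)
  rw [h3, zpow_neg, ENNReal.ofReal_inv_of_pos (by have := hp.out.pos; positivity)]
  congr 1
  rw [zpow_natCast, ENNReal.ofReal_pow (by positivity)]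
  simp

lemma mu_ball (x : ℤ_[p]) (s : ℝ) (hs : 0 < s) :
    mu p {y | ‖y - x‖ ≤ s} ≤ ENNReal.ofReal s := by
  have htr : mu p {y | ‖y - x‖ ≤ s} = mu p {y | ‖y‖ ≤ s} := by
    have := measure_preimage_add_right (mu p) (-x) {y | ‖y‖ ≤ s}
    simpa [sub_eq_add_neg] using this
  rw [htr]
  rcases le_or_gt 1 s with h | h
  · calc _ ≤ (1 : ENNReal) := prob_le_one
      _ ≤ _ := by rw [← ENNReal.ofReal_one]; exact ENNReal.ofReal_le_ofReal h
  have hp1 : (1 : ℝ) < p := by exact_mod_cast hp.out.one_lt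
  obtain ⟨n, hn1, hn2⟩ := exists_nat_pow_near_of_lt_one hs h.le (inv_pos.2 (by linarith : (0:ℝ) < p))
    (inv_lt_one_of_one_lt₀ hp1)
  have hpow : ((p : ℝ)⁻¹) ^ n = (p : ℝ) ^ (-n : ℤ) := by simp
  rw [hpow] at hn2
  rcases hn2.eq_or_lt with h2 | h2
  · rw [h2, mu_pow_ball]
  have hsub : {y : ℤ_[p] | ‖y‖ ≤ s} ⊆ {y | ‖y‖ ≤ (p : ℝ) ^ (-((n + 1 : ℕ)) : ℤ)} := by
    intro y hy
    simp only [mem_ofPred_eq] at hy ⊢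
    rw [PadicInt.norm_le_pow_iff_norm_lt_pow_add_one]
    have : (-((n + 1 : ℕ) : ℤ)) + 1 = -n := by push_cast; ring
    rw [this]
    exact hy.trans_lt h2
  refine (measure_mono hsub).trans ?_
  rw [mu_pow_ball]
  apply ENNReal.ofReal_le_ofReal
  have : (p : ℝ) ^ (-((n + 1 : ℕ)) : ℤ) = ((p : ℝ)⁻¹) ^ (n+1) := by
    rw [zpow_neg, zpow_natCast, inv_pow]
  rw [this]; exact hn1.le

lemma dvd_iff_norm (c x : ℤ_[p]) (hc : c ≠ 0) : c ∣ x ↔ ‖x‖ ≤ ‖c‖ := by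
  constructor
  · rintro ⟨y, rfl⟩
    rw [norm_mul]
    exact mul_le_of_le_one_right (norm_nonneg _) (PadicInt.norm_le_one y)
  · intro h
    rw [PadicInt.norm_eq_zpow_neg_valuation hc, PadicInt.norm_le_pow_iff_mem_span_pow,
      Ideal.mem_span_singleton] at h
    have h2 := PadicInt.unitCoeff_spec hc
    rw [h2]
    exact (Units.isUnit _).mul_left_dvd.2 h

lemma mu_lin (c β : ℤ_[p]) (hc : c ≠ 0) (S : Set ℤ_[p]) (hS : MeasurableSet S) :
    mu p {e | c * e + β ∈ S} ≤ ENNReal.ofReal (‖c‖⁻¹) * mu p S := by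
  have hcpos : 0 < ‖c‖ := norm_pos_iff.2 hc
  have hcont : Continuous (fun e : ℤ_[p] => c * e) := by fun_prop
  have hinj : Function.Injective (fun e : ℤ_[p] => c * e) := mul_right_injective₀ hc
  have hemb : MeasurableEmbedding (fun e : ℤ_[p] => c * e) :=
    (hcont.isClosedEmbedding hinj).measurableEmbedding
  let m := Measure.comap (fun e : ℤ_[p] => c * e) (mu p)
  have hm : ∀ T, m T = mu p ((fun e => c * e) '' T) := fun T => hemb.comap_apply _ _
  have hinv : m.IsAddLeftInvariant := ⟨by
    intro t
    ext T hT
    rw [Measure.map_apply (measurable_const_add t) hT, hm, hm]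
    have := measure_preimage_add (mu p) (c * t) ((fun e => c * e) '' T)
    rw [← this]
    congr 1
    ext x
    simp only [mem_image, mem_preimage]
    constructor
    · rintro ⟨y, hy, rfl⟩
      exact ⟨t + y, hy, by ring⟩
    · rintro ⟨y, hy, hxy⟩
      refine ⟨y - t, by simpa using hy, ?_⟩
      rw [mul_sub, hxy]; ring⟩
  have hfin : IsFiniteMeasure m := ⟨by
    rw [hm]; exact measure_lt_top _ _⟩
  have heq := Measure.isAddInvariant_eq_smul_of_compactSpace m (mu p)
  set q := m.addHaarScalarFactor (mu p)
  have huniv : m univ = ENNReal.ofReal ‖c‖ := by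
    rw [hm]
    have h1 : ((fun e => c * e) '' (univ : Set ℤ_[p])) = {x | ‖x‖ ≤ ‖c‖} := by
      ext x
      simp only [image_univ, mem_range, mem_ofPred_eq]
      rw [← dvd_iff_norm p c x hc]
      constructor
      · rintro ⟨y, rfl⟩; exact ⟨y, rfl⟩
      · rintro ⟨y, rfl⟩; exact ⟨y, rfl⟩
    rw [h1, PadicInt.norm_eq_zpow_neg_valuation hc, mu_pow_ball]
  have hq : (q : ENNReal) = ENNReal.ofReal ‖c‖ := by
    rw [← huniv, heq]
    simp
  have h1 : mu p {e | c * e + β ∈ S} = ENNReal.ofReal (‖c‖⁻¹) * m {e | c * e + β ∈ S} := by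
    rw [heq, Measure.smul_apply, ENNReal.smul_def, smul_eq_mul, hq, ← mul_assoc,
      ← ENNReal.ofReal_mul (by positivity), inv_mul_cancel₀ hcpos.ne']
    simp
  rw [h1, hm]
  rw [← measure_preimage_add_right (mu p) β S]
  refine mul_le_mul_right (measure_mono ?_) _
  rintro _ ⟨e, he, rfl⟩
  exact he

end basics

section basics2
variable (p : ℕ) [hp : Fact p.Prime]

lemma norm_nat_ge (n : ℕ) (hn : 0 < n) : (n : ℝ)⁻¹ ≤ ‖(n : ℤ_[p])‖ := by
  have hn0 : (n : ℤ_[p]) ≠ 0 := by exact_mod_cast hn.ne'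
  have hp0 : (0:ℝ) < p := by exact_mod_cast hp.out.pos
  have h := PadicInt.norm_eq_zpow_neg_valuation hn0
  have h2 : ‖((n : ℤ) : ℤ_[p])‖ ≤ (p : ℝ) ^ (-((n : ℤ_[p]).valuation : ℤ)) := by
    rw [← h]; simp
  rw [PadicInt.norm_int_le_pow_iff_dvd] at h2
  have h3 : p ^ (n : ℤ_[p]).valuation ≤ n := Nat.le_of_dvd hn (by exact_mod_cast h2)
  rw [h, zpow_neg, zpow_natCast]
  apply inv_anti₀ (by positivity)
  exact_mod_cast h3

lemma norm_two_ge : (1/2 : ℝ) ≤ ‖(2 : ℤ_[p])‖ := by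
  have := norm_nat_ge p 2 (by norm_num); norm_num at this ⊢; exact this

lemma ultra_sub (x y : ℤ_[p]) : ‖x - y‖ ≤ max ‖x‖ ‖y‖ := by
  rw [sub_eq_add_neg, ← norm_neg y]; exact PadicInt.nonarchimedean _ _

lemma mu_ball_lin (c r x : ℤ_[p]) (hc : c ≠ 0) (s : ℝ) (hs : 0 < s) :
    mu p {d | ‖c * d + r - x‖ ≤ s} ≤ ENNReal.ofReal (‖c‖⁻¹ * s) := by
  have hcl : IsClosed {y : ℤ_[p] | ‖y - x‖ ≤ s} := isClosed_le (by fun_prop) continuous_const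
  have h := mu_lin p c r hc {y | ‖y - x‖ ≤ s} hcl.measurableSet
  refine h.trans ?_
  rw [ENNReal.ofReal_mul (by positivity)]
  gcongr
  exact mu_ball p x s hs

/-- measure of the set where a square is close to a given number -/
lemma mu_sq (c r t : ℤ_[p]) (hc : c ≠ 0) (E : ℝ) (hE : 0 < E) :
    mu p {d | ‖(c * d + r) ^ 2 - t‖ ≤ E}
      ≤ ENNReal.ofReal (4 * ‖c‖⁻¹ * E / max (√‖t‖) (√E)) := by
  have hsE : 0 < √E := Real.sqrt_pos.2 hE
  have hEE : √E * √E = E := Real.mul_self_sqrt hE.le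
  have hmx : 0 < max (√‖t‖) (√E) := lt_max_of_lt_right hsE
  set s : ℝ := 2 * E / max (√‖t‖) (√E) with hs
  have hs0 : 0 < s := by positivity
  rcases eq_empty_or_nonempty {d | ‖(c * d + r) ^ 2 - t‖ ≤ E} with h | ⟨d0, hd0⟩
  · rw [h]; simp
  simp only [mem_ofPred_eq] at hd0
  set x0 := c * d0 + r with hx0
  have key : ∀ x : ℤ_[p], ‖x ^ 2 - t‖ ≤ E → ‖x - x0‖ ≤ s ∨ ‖x - (-x0)‖ ≤ s := by
    intro x hx
    have h1 : ‖x - x0‖ * ‖x - (-x0)‖ ≤ E := by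
      rw [← norm_mul]
      have : (x - x0) * (x - -x0) = (x ^ 2 - t) - (x0 ^ 2 - t) := by ring
      rw [this]
      exact (ultra_sub p _ _).trans (max_le hx hd0)
    by_contra hcon
    push Not at hcon
    obtain ⟨ha, hb⟩ := hcon
    rcases le_or_gt ‖t‖ E with ht | ht
    · have hm : max (√‖t‖) (√E) = √E := max_eq_right (Real.sqrt_le_sqrt ht)
      have : √E ≤ s := by
        rw [hs, hm, le_div_iff₀ hsE]; nlinarith
      nlinarith
    · have hm : max (√‖t‖) (√E) = √‖t‖ := max_eq_left (Real.sqrt_le_sqrt ht.le)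
      have hx0n : ‖x0‖ ^ 2 = ‖t‖ := by
        rw [← norm_pow]
        have : ‖x0 ^ 2 - t‖ < ‖t‖ := lt_of_le_of_lt hd0 ht
        have h4 : ‖x0 ^ 2 - t + t‖ = max ‖x0 ^ 2 - t‖ ‖t‖ :=
          PadicInt.norm_add_eq_max_of_ne this.ne
        rw [sub_add_cancel] at h4
        rw [h4, max_eq_right this.le]
      have hx0s : √‖t‖ = ‖x0‖ := by
        rw [← hx0n]; exact Real.sqrt_sq (norm_nonneg _)
      have ht0 : 0 < √‖t‖ := Real.sqrt_pos.2 (hE.trans ht)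
      have h5 : ‖x0‖ / 2 ≤ max ‖x - -x0‖ ‖x - x0‖ := by
        have := ultra_sub p (x - -x0) (x - x0)
        have h6 : (x - -x0) - (x - x0) = 2 * x0 := by ring
        rw [h6, norm_mul] at this
        have h7 := norm_two_ge p
        nlinarith [norm_nonneg x0]
      have h8 : s * (‖x0‖ / 2) = E := by
        rw [hs, hm, hx0s]; rw [hx0s] at ht0; field_simp
      rcases le_max_iff.1 h5 with h9 | h9
      · nlinarith [norm_nonneg (x - x0)]
      · nlinarith [norm_nonneg (x - -x0)]
  have hsub : {d | ‖(c * d + r) ^ 2 - t‖ ≤ E} ⊆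
      {d | ‖c * d + r - x0‖ ≤ s} ∪ {d | ‖c * d + r - (-x0)‖ ≤ s} := by
    intro d hd; exact key _ hd
  refine (measure_mono hsub).trans ((measure_union_le _ _).trans ?_)
  refine (add_le_add (mu_ball_lin p c r x0 hc s hs0) (mu_ball_lin p c r (-x0) hc s hs0)).trans ?_
  rw [← ENNReal.ofReal_add (by positivity) (by positivity)]
  apply ENNReal.ofReal_le_ofReal
  apply le_of_eq
  rw [hs]; ring

end basics2

section HH
variable (p : ℕ) [hp : Fact p.Prime]

noncomputable def mu2 : Measure (ℤ_[p] × ℤ_[p]) := (mu p).prod (mu p)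
noncomputable def mu3 : Measure ((ℤ_[p] × ℤ_[p]) × ℤ_[p]) := (mu2 p).prod (mu p)

instance : IsProbabilityMeasure (mu2 p) := by unfold mu2; infer_instance
instance : IsProbabilityMeasure (mu3 p) := by unfold mu3; infer_instance

lemma prod_fiber_le {X Y : Type*} [MeasurableSpace X] [MeasurableSpace Y] (μ : Measure X)
    (ν : Measure Y) [SFinite ν] (S : Set (X × Y)) (hS : MeasurableSet S) (P : Set X)
    (hP : MeasurableSet P) (m : ENNReal)
    (h1 : ∀ x ∈ P, ν (Prod.mk x ⁻¹' S) ≤ m) (h2 : ∀ x, ∀ y, (x, y) ∈ S → x ∈ P) :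
    μ.prod ν S ≤ m * μ P := by
  rw [Measure.prod_apply hS]
  calc ∫⁻ x, ν (Prod.mk x ⁻¹' S) ∂μ ≤ ∫⁻ x, P.indicator (fun _ => m) x ∂μ := by
        apply lintegral_mono
        intro x
        by_cases hx : x ∈ P
        · simpa [hx] using h1 x hx
        · have : Prod.mk x ⁻¹' S = ∅ := by
            ext y; simp only [mem_preimage, mem_empty_iff_false, iff_false]
            exact fun h => hx (h2 x y h)
          simp [this]
    _ = m * μ P := by rw [lintegral_indicator_const hP]

lemma Hball (a τ : ℤ_[p]) (ha : a ≠ 0) (hτ : ‖τ‖ ≤ ‖a‖) (r : ℝ) (hr : 0 < r) :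
    mu2 p {x | ‖8 * a * x.2 - 3 * x.1 ^ 2 - τ‖ ≤ r} ≤ ENNReal.ofReal (14 * r / √‖a‖) := by
  have hA : 0 < ‖a‖ := norm_pos_iff.2 ha
  set m := max r ‖a‖ with hm
  have hm0 : 0 < m := lt_max_of_lt_left hr
  have hcl : IsClosed {x : ℤ_[p] × ℤ_[p] | ‖8 * a * x.2 - 3 * x.1 ^ 2 - τ‖ ≤ r} :=
    isClosed_le (by fun_prop) continuous_const
  have hclP : IsClosed {b : ℤ_[p] | ‖b - 0‖ ≤ √(3 * m)} :=
    isClosed_le (by fun_prop) continuous_const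
  have h8 : (1/8 : ℝ) ≤ ‖(8 : ℤ_[p])‖ := by
    have := norm_nat_ge p 8 (by norm_num); norm_num at this ⊢; exact this
  have h3 : (1/3 : ℝ) ≤ ‖(3 : ℤ_[p])‖ := by
    have := norm_nat_ge p 3 (by norm_num); norm_num at this ⊢; exact this
  have h80 : (8 * a : ℤ_[p]) ≠ 0 := by
    refine mul_ne_zero ?_ ha
    intro h; rw [h, norm_zero] at h8; norm_num at h8
  have hfib := prod_fiber_le (mu p) (mu p) _ hcl.measurableSet _ hclP.measurableSet
    (ENNReal.ofReal (8 * r / m)) ?_ ?_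
  · refine hfib.trans ?_
    refine (mul_le_mul_right (mu_ball p 0 _ (by positivity)) _).trans ?_
    rw [← ENNReal.ofReal_mul (by positivity)]
    apply ENNReal.ofReal_le_ofReal
    have hsm : √m * √m = m := Real.mul_self_sqrt hm0.le
    have hsm0 : 0 < √m := Real.sqrt_pos.2 hm0
    have hsA0 : 0 < √‖a‖ := Real.sqrt_pos.2 hA
    have hle : √‖a‖ ≤ √m := Real.sqrt_le_sqrt (le_max_right _ _)
    have hs3 : √3 ≤ 14 / 8 := by
      rw [Real.sqrt_le_left (by norm_num)]; norm_num
    rw [Real.sqrt_mul (by norm_num)]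
    calc 8 * r / m * (√3 * √m) = 8 * √3 * r / √m := by
          rw [div_mul_eq_mul_div, div_eq_div_iff hm0.ne' hsm0.ne']
          linear_combination 8 * r * √3 * hsm
      _ ≤ 14 * r / √‖a‖ := by
          gcongr
          linarith
  · intro b _
    have e1 : Prod.mk b ⁻¹' {x : ℤ_[p] × ℤ_[p] | ‖8 * a * x.2 - 3 * x.1 ^ 2 - τ‖ ≤ r}
        = {c | ‖8 * a * c + 0 - (3 * b ^ 2 + τ)‖ ≤ r} := by
      ext c
      simp only [mem_preimage, mem_ofPred_eq]
      rw [show 8 * a * c + 0 - (3 * b ^ 2 + τ) = 8 * a * c - 3 * b ^ 2 - τ by ring]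
    rw [e1]
    rcases le_total r ‖a‖ with h | h
    · refine (mu_ball_lin p _ _ _ h80 r hr).trans ?_
      apply ENNReal.ofReal_le_ofReal
      rw [hm, max_eq_right h, norm_mul, mul_inv, mul_comm _ r, ← mul_assoc, mul_comm 8 r,
        div_eq_mul_inv]
      gcongr
      rw [inv_le_comm₀ (by linarith) (by norm_num)]
      linarith
    · refine prob_le_one.trans ?_
      rw [hm, max_eq_left h, ← ENNReal.ofReal_one]
      apply ENNReal.ofReal_le_ofReal
      rw [mul_div_assoc, div_self hr.ne']; norm_num
  · intro b c hbc
    simp only [mem_ofPred_eq, sub_zero] at hbc ⊢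
    have : 3 * b ^ 2 = (8 * a * c - τ) - (8 * a * c - 3 * b ^ 2 - τ) := by ring
    have h1 : ‖(3 : ℤ_[p]) * b ^ 2‖ ≤ m := by
      rw [this]
      refine (ultra_sub p _ _).trans (max_le ?_ (hbc.trans (le_max_left _ _)))
      refine (ultra_sub p _ _).trans (max_le ?_ (hτ.trans (le_max_right _ _)))
      refine le_trans ?_ (le_max_right _ _)
      rw [norm_mul, norm_mul]
      have e1 := PadicInt.norm_le_one (8 : ℤ_[p])
      have e2 := PadicInt.norm_le_one c
      calc _ ≤ 1 * ‖a‖ * 1 := by gcongr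
        _ = _ := by ring
    rw [norm_mul, norm_pow] at h1
    apply Real.le_sqrt_of_sq_le
    nlinarith [sq_nonneg ‖b‖]

lemma Lint (a τ : ℤ_[p]) (ha : a ≠ 0) (hτ : ‖τ‖ ≤ ‖a‖) (n : ℕ) :
    ∫⁻ x, ENNReal.ofReal (1 / max ‖8 * a * x.2 - 3 * x.1 ^ 2 - τ‖ ((p : ℝ) ^ (-n : ℤ))) ∂(mu2 p)
      ≤ ENNReal.ofReal ((n + 1) * 14 / √‖a‖) := by
  have hA : 0 < ‖a‖ := norm_pos_iff.2 ha
  have hp0 : (0:ℝ) < p := by exact_mod_cast hp.out.pos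
  have hp1 : (1:ℝ) ≤ p := by exact_mod_cast hp.out.one_lt.le
  let S : ℕ → Set (ℤ_[p] × ℤ_[p]) :=
    fun h => {x | ‖8 * a * x.2 - 3 * x.1 ^ 2 - τ‖ ≤ (p : ℝ) ^ (-h : ℤ)}
  have hS : ∀ h, MeasurableSet (S h) := fun h =>
    (isClosed_le (by fun_prop) continuous_const : IsClosed (S h)).measurableSet
  calc _ ≤ ∫⁻ x, ∑ h ∈ Finset.range (n+1),
            (S h).indicator (fun _ => ENNReal.ofReal ((p:ℝ) ^ h)) x ∂(mu2 p) := by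
        apply lintegral_mono
        intro x
        dsimp only
        set y := 8 * a * x.2 - 3 * x.1 ^ 2 - τ with hy
        obtain ⟨h, hh, hxh, hle⟩ : ∃ h ∈ Finset.range (n+1), x ∈ S h ∧
            (p : ℝ) ^ (-h : ℤ) ≤ max ‖y‖ ((p : ℝ) ^ (-n : ℤ)) := by
          by_cases hyn : ‖y‖ ≤ (p : ℝ) ^ (-n : ℤ)
          · exact ⟨n, by simp, hyn, le_max_right _ _⟩
          · have hy0 : y ≠ 0 := by
              intro h; apply hyn; rw [h, norm_zero]; positivity
            refine ⟨y.valuation, ?_, ?_, ?_⟩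
            · rw [PadicInt.norm_le_pow_iff_le_valuation y hy0] at hyn
              simp; omega
            · exact (PadicInt.norm_eq_zpow_neg_valuation hy0).le
            · rw [← PadicInt.norm_eq_zpow_neg_valuation hy0]; exact le_max_left _ _
        calc ENNReal.ofReal (1 / max ‖y‖ ((p : ℝ) ^ (-n : ℤ)))
            ≤ ENNReal.ofReal ((p:ℝ)^h) := by
              apply ENNReal.ofReal_le_ofReal
              rw [div_le_iff₀ (lt_max_of_lt_right (by positivity))]
              calc (1:ℝ) = (p:ℝ)^h * (p : ℝ) ^ (-h : ℤ) := by
                    rw [zpow_neg, zpow_natCast, mul_inv_cancel₀ (by positivity)]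
                _ ≤ _ := by gcongr
          _ = (S h).indicator (fun _ => ENNReal.ofReal ((p:ℝ) ^ h)) x := by simp [hxh]
          _ ≤ _ := Finset.single_le_sum
              (f := fun h => (S h).indicator (fun _ => ENNReal.ofReal ((p:ℝ) ^ h)) x)
              (fun _ _ => zero_le) hh
    _ = ∑ h ∈ Finset.range (n+1), ENNReal.ofReal ((p:ℝ) ^ h) * mu2 p (S h) := by
        rw [lintegral_finsetSum]
        · simp_rw [lintegral_indicator_const (hS _)]
        · intro h _; exact measurable_const.indicator (hS h)
    _ ≤ ∑ h ∈ Finset.range (n+1), ENNReal.ofReal (14 / √‖a‖) := by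
        apply Finset.sum_le_sum
        intro h _
        refine (mul_le_mul_right (Hball p a τ ha hτ _ (by positivity)) _).trans ?_
        rw [← ENNReal.ofReal_mul (by positivity)]
        apply ENNReal.ofReal_le_ofReal
        rw [zpow_neg, zpow_natCast]
        apply le_of_eq
        field_simp
    _ = _ := by
        rw [Finset.sum_const, Finset.card_range, nsmul_eq_mul, mul_div_assoc,
          ENNReal.ofReal_mul (by positivity)]
        congr 1
        rw [← Nat.cast_succ, ENNReal.ofReal_natCast]

end HH

section CC
variable (p : ℕ) [hp : Fact p.Prime]

/-- `H = 8ac - 3b²` -/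
noncomputable def HH (a : ℤ_[p]) (x : ℤ_[p] × ℤ_[p]) : ℤ_[p] := 8 * a * x.2 - 3 * x.1 ^ 2
/-- `R = b³ - 4abc + 8a²d` -/
noncomputable def RR (a : ℤ_[p]) (x : (ℤ_[p] × ℤ_[p]) × ℤ_[p]) : ℤ_[p] :=
  x.1.1 ^ 3 - 4 * a * x.1.1 * x.1.2 + 8 * a ^ 2 * x.2

lemma HH_cont (a : ℤ_[p]) : Continuous (HH p a) := by unfold HH; fun_prop
lemma RR_cont (a : ℤ_[p]) : Continuous (RR p a) := by unfold RR; fun_prop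

lemma dfib (a : ℤ_[p]) (ha : a ≠ 0) (E : ℝ) (hE : 0 < E) (x : ℤ_[p] × ℤ_[p]) (G : ℤ_[p]) :
    mu p {d | ‖27 * RR p a (x, d) ^ 2 + G‖ ≤ E}
      ≤ ENNReal.ofReal (864 * (‖a‖ ^ 2)⁻¹ * E / max (√‖27 * G‖) (√E)) := by
  have hA : 0 < ‖a‖ := norm_pos_iff.2 ha
  have h216 : (1/216 : ℝ) ≤ ‖(216 : ℤ_[p])‖ := by
    have := norm_nat_ge p 216 (by norm_num); norm_num at this ⊢; exact this
  have hc : (216 * a ^ 2 : ℤ_[p]) ≠ 0 := by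
    refine mul_ne_zero ?_ (pow_ne_zero _ ha)
    intro h; rw [h, norm_zero] at h216; norm_num at h216
  have h := mu_sq p (216 * a ^ 2) (27 * (x.1 ^ 3 - 4 * a * x.1 * x.2)) (-(27 * G)) hc E hE
  refine (measure_mono ?_).trans (h.trans ?_)
  · intro d hd
    simp only [mem_ofPred_eq, RR] at hd ⊢
    have e : (216 * a ^ 2 * d + 27 * (x.1 ^ 3 - 4 * a * x.1 * x.2)) ^ 2 - -(27 * G)
      = 27 * (27 * (x.1 ^ 3 - 4 * a * x.1 * x.2 + 8 * a ^ 2 * d) ^ 2 + G) := by ring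
    rw [e, norm_mul]
    exact (mul_le_of_le_one_left (norm_nonneg _) (PadicInt.norm_le_one _)).trans hd
  · apply ENNReal.ofReal_le_ofReal
    rw [norm_neg]
    have : 4 * ‖216 * a ^ 2‖⁻¹ ≤ 864 * (‖a‖ ^ 2)⁻¹ := by
      rw [norm_mul, mul_inv, norm_pow, ← mul_assoc]
      gcongr
      have : ‖(216 : ℤ_[p])‖⁻¹ ≤ 216 := by
        rw [inv_le_comm₀ (by linarith) (by norm_num)]; linarith
      linarith
    gcongr

lemma min_real_aux (B X Y : ℝ) (hX0 : 0 ≤ X) (hY0 : 0 ≤ Y) (hXY : B / 12 ≤ max Y X) :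
    B * (min X Y) ^ 2 ≤ 12 * (X ^ 2 * Y) := by
  rcases le_total X Y with h | h
  · rw [min_eq_left h]; rw [max_eq_left h] at hXY
    calc B * X ^ 2 ≤ (12 * Y) * X ^ 2 := by gcongr; linarith
      _ = _ := by ring
  · rw [min_eq_right h]; rw [max_eq_right h] at hXY
    calc B * Y ^ 2 ≤ (12 * X) * Y ^ 2 := by gcongr; linarith
      _ = 12 * (X * Y * Y) := by ring
      _ ≤ 12 * (X * Y * X) := by gcongr
      _ = _ := by ring

set_option maxHeartbeats 1000000 in
lemma caseB (a α : ℤ_[p]) (ha : a ≠ 0) (hα : α ≠ 0) (E : ℝ) (hE : 0 < E) (n : ℕ)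
    (hn : ‖a‖ * ‖α‖ * ((p : ℝ) ^ (-n : ℤ)) ^ 2 ≤ E) :
    mu3 p {x | ‖27 * RR p a x ^ 2 +
        (HH p a x.1 - 4 * a * α) ^ 2 * (HH p a x.1 + 8 * a * α)‖ ≤ E}
      ≤ ENNReal.ofReal (435456 * (n + 1) * E * (‖a‖ ^ 3)⁻¹ * (√‖α‖)⁻¹) := by
  have hA : 0 < ‖a‖ := norm_pos_iff.2 ha
  have hα0 : 0 < ‖α‖ := norm_pos_iff.2 hα
  have hp0 : (0:ℝ) < p := by exact_mod_cast hp.out.pos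
  have hHc := HH_cont p a
  have hRc := RR_cont p a
  have hcl : IsClosed {x | ‖27 * RR p a x ^ 2 +
        (HH p a x.1 - 4 * a * α) ^ 2 * (HH p a x.1 + 8 * a * α)‖ ≤ E} :=
    isClosed_le (by fun_prop) continuous_const
  set η : ℝ := (p : ℝ) ^ (-n : ℤ) with hη
  have hη0 : 0 < η := by positivity
  set B := ‖a‖ * ‖α‖ with hB
  have hB0 : 0 < B := by positivity
  have hsB : 0 < √B := Real.sqrt_pos.2 hB0
  set K : ℝ := 864 * (‖a‖ ^ 2)⁻¹ * E * (18 / √B) with hK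
  have hK0 : 0 < K := by positivity
  have h12 : (1/12 : ℝ) ≤ ‖(12 : ℤ_[p])‖ := by
    have := norm_nat_ge p 12 (by norm_num); norm_num at this ⊢; exact this
  have h27 : (1/27 : ℝ) ≤ ‖(27 : ℤ_[p])‖ := by
    have := norm_nat_ge p 27 (by norm_num); norm_num at this ⊢; exact this
  have e4 := PadicInt.norm_le_one (4 : ℤ_[p])
  have e8 := PadicInt.norm_le_one (8 : ℤ_[p])
  have eα := PadicInt.norm_le_one α
  have hτ1 : ‖4 * a * α‖ ≤ ‖a‖ := by
    rw [norm_mul, norm_mul]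
    calc _ ≤ 1 * ‖a‖ * 1 := by gcongr
      _ = _ := by ring
  have hτ2 : ‖-(8 * a * α)‖ ≤ ‖a‖ := by
    rw [norm_neg, norm_mul, norm_mul]
    calc _ ≤ 1 * ‖a‖ * 1 := by gcongr
      _ = _ := by ring
  let f1 : ℤ_[p] × ℤ_[p] → ℝ := fun x => 1 / max ‖8 * a * x.2 - 3 * x.1 ^ 2 - 4 * a * α‖ η
  let f2 : ℤ_[p] × ℤ_[p] → ℝ := fun x => 1 / max ‖8 * a * x.2 - 3 * x.1 ^ 2 - -(8 * a * α)‖ η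
  have hc1 : Continuous f1 := by
    refine continuous_const.div (by fun_prop) (fun x => (lt_max_of_lt_right hη0).ne')
  rw [mu3, Measure.prod_apply hcl.measurableSet]
  calc _ ≤ ∫⁻ x, ENNReal.ofReal K * (ENNReal.ofReal (f1 x) + ENNReal.ofReal (f2 x)) ∂(mu2 p) := by
        apply lintegral_mono
        intro x
        refine (dfib p a ha E hE x
          ((HH p a x - 4 * a * α) ^ 2 * (HH p a x + 8 * a * α))).trans ?_
        have hf1 : 0 < f1 x := one_div_pos.2 (lt_max_of_lt_right hη0)
        have hf2 : 0 < f2 x := one_div_pos.2 (lt_max_of_lt_right hη0)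
        beta_reduce
        rw [← ENNReal.ofReal_add hf1.le hf2.le, ← ENNReal.ofReal_mul hK0.le]
        apply ENNReal.ofReal_le_ofReal
        have ex : ‖HH p a x - 4 * a * α‖ = ‖8 * a * x.2 - 3 * x.1 ^ 2 - 4 * a * α‖ := rfl
        have ey : ‖HH p a x + 8 * a * α‖ = ‖8 * a * x.2 - 3 * x.1 ^ 2 - -(8 * a * α)‖ := by
          rw [sub_neg_eq_add]; rfl
        set X := ‖HH p a x - 4 * a * α‖ with hX
        set Y := ‖HH p a x + 8 * a * α‖ with hY
        have hX0 : 0 ≤ X := norm_nonneg _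
        have hY0 : 0 ≤ Y := norm_nonneg _
        have hf1' : f1 x = 1 / max X η := by rw [ex]
        have hf2' : f2 x = 1 / max Y η := by rw [ey]
        have hXY : B / 12 ≤ max Y X := by
          have := ultra_sub p (HH p a x + 8 * a * α) (HH p a x - 4 * a * α)
          rw [show HH p a x + 8 * a * α - (HH p a x - 4 * a * α) = 12 * (a * α) by ring,
            norm_mul, norm_mul] at this
          refine le_trans ?_ this
          rw [hB]; nlinarith
        have ht : ‖27 * ((HH p a x - 4 * a * α) ^ 2 * (HH p a x + 8 * a * α))‖
            = ‖(27 : ℤ_[p])‖ * (X ^ 2 * Y) := by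
          rw [norm_mul, norm_mul, norm_pow]
        have hmin : √B / 18 * min X Y ≤
            √‖27 * ((HH p a x - 4 * a * α) ^ 2 * (HH p a x + 8 * a * α))‖ := by
          rw [ht]
          apply Real.le_sqrt_of_sq_le
          have hsq : √B ^ 2 = B := Real.sq_sqrt hB0.le
          rw [mul_pow, div_pow, hsq]
          have hX2 : 0 ≤ X ^ 2 * Y := by positivity
          suffices h : B * (min X Y) ^ 2 ≤ 12 * (X ^ 2 * Y) by nlinarith
          exact min_real_aux B X Y hX0 hY0 hXY
        have hE2 : √B * η ≤ √E := by
          apply Real.le_sqrt_of_sq_le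
          rw [mul_pow, Real.sq_sqrt hB0.le]; exact hn
        have hden : √B / 18 * max (min X Y) η ≤
          max (√‖27 * ((HH p a x - 4 * a * α) ^ 2 * (HH p a x + 8 * a * α))‖) (√E) := by
          rcases le_total (min X Y) η with h | h
          · rw [max_eq_right h]
            refine le_trans ?_ (le_max_right _ _)
            have : 0 < √B * η := by positivity
            linarith
          · rw [max_eq_left h]
            exact hmin.trans (le_max_left _ _)
        have hmm : 0 < max (min X Y) η := lt_max_of_lt_right hη0
        calc _ ≤ 864 * (‖a‖ ^ 2)⁻¹ * E / (√B / 18 * max (min X Y) η) := by gcongr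
          _ = K * (1 / max (min X Y) η) := by rw [hK]; field_simp
          _ ≤ K * (f1 x + f2 x) := by
            gcongr
            rcases le_total X Y with h | h
            · rw [min_eq_left h, ← hf1']; linarith
            · rw [min_eq_right h, ← hf2']; linarith
    _ = ENNReal.ofReal K * (∫⁻ x, ENNReal.ofReal (f1 x) ∂(mu2 p)
          + ∫⁻ x, ENNReal.ofReal (f2 x) ∂(mu2 p)) := by
        rw [lintegral_const_mul' _ _ ENNReal.ofReal_ne_top,
          lintegral_add_left (hc1.measurable.ennreal_ofReal)]
    _ ≤ ENNReal.ofReal K * (ENNReal.ofReal ((n + 1) * 14 / √‖a‖)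
          + ENNReal.ofReal ((n + 1) * 14 / √‖a‖)) := by
        gcongr
        · exact Lint p a _ ha hτ1 n
        · exact Lint p a _ ha hτ2 n
    _ = _ := by
        rw [← ENNReal.ofReal_add (by positivity) (by positivity), ← ENNReal.ofReal_mul hK0.le]
        congr 1
        rw [hK, hB, Real.sqrt_mul hA.le]
        have hsA : √‖a‖ * √‖a‖ = ‖a‖ := Real.mul_self_sqrt hA.le
        have hsA0 : 0 < √‖a‖ := Real.sqrt_pos.2 hA
        have hsα0 : 0 < √‖α‖ := Real.sqrt_pos.2 hα0
        have e3 : (‖a‖ ^ 3)⁻¹ = (‖a‖ ^ 2)⁻¹ * (√‖a‖)⁻¹ * (√‖a‖)⁻¹ := by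
          rw [mul_assoc, ← mul_inv, hsA, ← mul_inv, ← pow_succ]
        rw [e3]
        simp only [div_eq_mul_inv, mul_inv]
        ring

lemma caseA (a I : ℤ_[p]) (ha : a ≠ 0) (E B r : ℝ) (hE : 0 < E) (hB : 0 < B) (hr : 0 < r)
    (n : ℕ) (hI : ‖a‖ ^ 2 * ‖I‖ < B ^ 2) (hn : (p : ℝ) ^ (-n : ℤ) ≤ B)
    (hBr : ∀ x : ℤ_[p], ‖x‖ < B → ‖x‖ ≤ r) :
    mu3 p {x | ‖27 * RR p a x ^ 2 +
        (HH p a x.1 ^ 3 - 48 * a ^ 2 * HH p a x.1 * I)‖ ≤ E}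
      ≤ ENNReal.ofReal (72576 * (‖a‖ ^ 2)⁻¹ * (√‖a‖)⁻¹ *
          ((n + 1) * E * (√B)⁻¹ + √E * r)) := by
  have hA : 0 < ‖a‖ := norm_pos_iff.2 ha
  have hp0 : (0:ℝ) < p := by exact_mod_cast hp.out.pos
  have hHc := HH_cont p a
  have hRc := RR_cont p a
  have hcl : IsClosed {x | ‖27 * RR p a x ^ 2 +
        (HH p a x.1 ^ 3 - 48 * a ^ 2 * HH p a x.1 * I)‖ ≤ E} :=
    isClosed_le (by fun_prop) continuous_const
  set η : ℝ := (p : ℝ) ^ (-n : ℤ) with hη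
  have hη0 : 0 < η := by positivity
  have hsB : 0 < √B := Real.sqrt_pos.2 hB
  have hsE : 0 < √E := Real.sqrt_pos.2 hE
  have hEE : √E * √E = E := Real.mul_self_sqrt hE.le
  have hsA0 : 0 < √‖a‖ := Real.sqrt_pos.2 hA
  set K : ℝ := 864 * (‖a‖ ^ 2)⁻¹ * E * (6 / √B) with hK
  have hK0 : 0 < K := by positivity
  set K2 : ℝ := 864 * (‖a‖ ^ 2)⁻¹ * √E with hK2
  have hK20 : 0 < K2 := by positivity
  have h27 : (1/27 : ℝ) ≤ ‖(27 : ℤ_[p])‖ := by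
    have := norm_nat_ge p 27 (by norm_num); norm_num at this ⊢; exact this
  let f1 : ℤ_[p] × ℤ_[p] → ℝ := fun x => 1 / max ‖8 * a * x.2 - 3 * x.1 ^ 2 - 0‖ η
  let S : Set (ℤ_[p] × ℤ_[p]) := {x | ‖8 * a * x.2 - 3 * x.1 ^ 2 - 0‖ ≤ r}
  have hS : MeasurableSet S :=
    (isClosed_le (by fun_prop) continuous_const : IsClosed S).measurableSet
  have hc1 : Continuous f1 := by
    refine continuous_const.div (by fun_prop) (fun x => (lt_max_of_lt_right hη0).ne')
  rw [mu3, Measure.prod_apply hcl.measurableSet]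
  calc _ ≤ ∫⁻ x, (ENNReal.ofReal K * ENNReal.ofReal (f1 x)
            + S.indicator (fun _ => ENNReal.ofReal K2) x) ∂(mu2 p) := by
        apply lintegral_mono
        intro x
        refine (dfib p a ha E hE x
          (HH p a x ^ 3 - 48 * a ^ 2 * HH p a x * I)).trans ?_
        have hf1 : 0 < f1 x := one_div_pos.2 (lt_max_of_lt_right hη0)
        have ex : ‖HH p a x‖ = ‖8 * a * x.2 - 3 * x.1 ^ 2 - 0‖ := by rw [sub_zero]; rfl
        set X := ‖HH p a x‖ with hX
        have hX0 : 0 ≤ X := norm_nonneg _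
        have hf1' : f1 x = 1 / max X η := by rw [ex]
        rcases lt_or_ge X B with h | h
        · have hx : x ∈ S := by
            have := hBr _ h
            rw [← hX, ex] at this; exact this
          refine le_trans ?_ le_add_self
          simp only [hx, indicator_of_mem]
          apply ENNReal.ofReal_le_ofReal
          calc _ ≤ 864 * (‖a‖ ^ 2)⁻¹ * E / √E := by
                gcongr; exact le_max_right _ _
            _ = K2 := by
                rw [hK2, div_eq_iff hsE.ne']; rw [mul_assoc _ (√E), hEE]
        · refine le_trans ?_ le_self_add
          rw [← ENNReal.ofReal_mul hK0.le]
          apply ENNReal.ofReal_le_ofReal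
          have hXpos : 0 < X := hB.trans_le h
          have h1 : ‖48 * a ^ 2 * HH p a x * I‖ < ‖HH p a x ^ 3‖ := by
            rw [norm_mul, norm_mul, norm_mul, norm_pow, norm_pow]
            calc ‖(48 : ℤ_[p])‖ * ‖a‖ ^ 2 * X * ‖I‖ ≤ 1 * ‖a‖ ^ 2 * X * ‖I‖ := by
                  gcongr; exact PadicInt.norm_le_one _
              _ = (‖a‖ ^ 2 * ‖I‖) * X := by ring
              _ < B ^ 2 * X := by gcongr
              _ ≤ X ^ 2 * X := by gcongr
              _ = X ^ 3 := by ring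
          have h2 : ‖HH p a x ^ 3 - 48 * a ^ 2 * HH p a x * I‖ = X ^ 3 := by
            rw [sub_eq_add_neg, PadicInt.norm_add_eq_max_of_ne (by rw [norm_neg]; exact h1.ne'),
              norm_neg, max_eq_left h1.le, norm_pow]
          have h3 : √B / 6 * X ≤ √‖27 * (HH p a x ^ 3 - 48 * a ^ 2 * HH p a x * I)‖ := by
            apply Real.le_sqrt_of_sq_le
            rw [norm_mul, h2, mul_pow, div_pow, Real.sq_sqrt hB.le]
            have : B * X ^ 2 ≤ X ^ 3 := by nlinarith [sq_nonneg X]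
            have : 0 ≤ X ^ 3 := by positivity
            nlinarith
          calc _ ≤ 864 * (‖a‖ ^ 2)⁻¹ * E / (√B / 6 * X) := by
                gcongr; exact h3.trans (le_max_left _ _)
            _ = K * (1 / X) := by rw [hK]; field_simp
            _ = K * f1 x := by rw [hf1', max_eq_left (hn.trans h)]
    _ = ENNReal.ofReal K * (∫⁻ x, ENNReal.ofReal (f1 x) ∂(mu2 p))
          + ENNReal.ofReal K2 * mu2 p S := by
        rw [lintegral_add_left ((hc1.measurable.ennreal_ofReal).const_mul _),
          lintegral_const_mul' _ _ ENNReal.ofReal_ne_top, lintegral_indicator_const hS]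
    _ ≤ ENNReal.ofReal K * ENNReal.ofReal ((n + 1) * 14 / √‖a‖)
          + ENNReal.ofReal K2 * ENNReal.ofReal (14 * r / √‖a‖) := by
        gcongr
        · exact Lint p a _ ha (by simp) n
        · exact Hball p a _ ha (by simp) r hr
    _ ≤ _ := by
        rw [← ENNReal.ofReal_mul hK0.le, ← ENNReal.ofReal_mul hK20.le,
          ← ENNReal.ofReal_add (by positivity) (by positivity)]
        apply ENNReal.ofReal_le_ofReal
        rw [hK, hK2, mul_add]
        apply add_le_add
        · apply le_of_eq
          simp only [div_eq_mul_inv]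
          ring
        · have : 0 ≤ (‖a‖ ^ 2)⁻¹ * (√‖a‖)⁻¹ * (√E * r) := by positivity
          have e : 864 * (‖a‖ ^ 2)⁻¹ * √E * (14 * r / √‖a‖)
            = 12096 * ((‖a‖ ^ 2)⁻¹ * (√‖a‖)⁻¹ * (√E * r)) := by
            simp only [div_eq_mul_inv]; ring
          rw [e]
          nlinarith

end CC

section DD
variable (p : ℕ) [hp : Fact p.Prime]

lemma norm_four_ge : (1/4 : ℝ) ≤ ‖(4 : ℤ_[p])‖ := by
  have := norm_nat_ge p 4 (by norm_num); norm_num at this ⊢; exact this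

lemma sqrt_exists (I J : ℤ_[p]) (h : ‖4 * I ^ 3 - J ^ 2‖ < ‖(16 : ℤ_[p])‖ * ‖I‖ ^ 3) :
    ∃ α : ℤ_[p], α ^ 2 = I := by
  have h4p : 0 < ‖(4 : ℤ_[p])‖ := by linarith [norm_four_ge p]
  have h2p : 0 < ‖(2 : ℤ_[p])‖ := by linarith [norm_two_ge p]
  have h41 := PadicInt.norm_le_one (4 : ℤ_[p])
  have h16 : ‖(16 : ℤ_[p])‖ = ‖(4 : ℤ_[p])‖ ^ 2 := by rw [← norm_pow]; norm_num
  have h42 : ‖(4 : ℤ_[p])‖ = ‖(2 : ℤ_[p])‖ ^ 2 := by rw [← norm_pow]; norm_num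
  have hI0 : I ≠ 0 := by
    rintro rfl
    simp only [norm_zero] at h
    have := norm_nonneg (4 * (0 : ℤ_[p]) ^ 3 - J ^ 2)
    norm_num at h
    linarith [norm_nonneg J, pow_nonneg (norm_nonneg J) 2]
  have hIp : 0 < ‖I‖ := norm_pos_iff.2 hI0
  have hI1 := PadicInt.norm_le_one I
  have hlt : ‖4 * I ^ 3 - J ^ 2‖ < ‖4 * I ^ 3‖ := by
    rw [norm_mul, norm_pow]
    refine h.trans_le ?_
    rw [h16]
    have : 0 < ‖I‖ ^ 3 := by positivity
    gcongr
    nlinarith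
  have hJn : ‖J‖ ^ 2 = ‖(4 : ℤ_[p])‖ * ‖I‖ ^ 3 := by
    have e : J ^ 2 = 4 * I ^ 3 + -(4 * I ^ 3 - J ^ 2) := by ring
    rw [← norm_pow, e, PadicInt.norm_add_eq_max_of_ne (by rw [norm_neg]; exact hlt.ne'),
      norm_neg, max_eq_left hlt.le, norm_mul, norm_pow]
  have hdvd : 2 * I ∣ J := by
    rw [dvd_iff_norm p _ _ (by
      refine mul_ne_zero ?_ hI0
      exact norm_pos_iff.1 h2p)]
    rw [norm_mul]
    apply (sq_le_sq₀ (by positivity) (by positivity)).1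
    rw [hJn, mul_pow, h42]
    gcongr ?_ * ?_
    exact pow_le_pow_of_le_one hIp.le hI1 (by norm_num)
  obtain ⟨α, rfl⟩ := hdvd
  have hfac : ‖α ^ 2 - I‖ < ‖(4 : ℤ_[p])‖ * ‖I‖ := by
    have e : 4 * I ^ 3 - (2 * I * α) ^ 2 = -(4 * I ^ 2 * (α ^ 2 - I)) := by ring
    rw [e, norm_neg, norm_mul, norm_mul, norm_pow, h16] at h
    have hpos : 0 < ‖(4 : ℤ_[p])‖ * ‖I‖ ^ 2 := by positivity
    have : ‖(4 : ℤ_[p])‖ * ‖I‖ ^ 2 * ‖α ^ 2 - I‖ <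
      ‖(4 : ℤ_[p])‖ * ‖I‖ ^ 2 * (‖(4 : ℤ_[p])‖ * ‖I‖) := by
      refine h.trans_le (le_of_eq ?_); ring
    exact lt_of_mul_lt_mul_left this hpos.le
  have hαn : ‖α‖ ^ 2 = ‖I‖ := by
    have hlt : ‖α ^ 2 - I‖ < ‖I‖ := hfac.trans_le (by nlinarith)
    have e : α ^ 2 = (α ^ 2 - I) + I := by ring
    rw [← norm_pow, e, PadicInt.norm_add_eq_max_of_ne hlt.ne, max_eq_right hlt.le]
  have hens := hensels_lemma (p := p) (R := ℤ_[p])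
    (F := Polynomial.X ^ 2 - Polynomial.C I) (a := α) (by
      simp only [map_sub, map_pow, Polynomial.aeval_X, Polynomial.aeval_C, Polynomial.derivative_sub,
        Polynomial.derivative_X_pow, Polynomial.derivative_C, sub_zero, map_mul]
      simp only [Nat.cast_ofNat, map_ofNat, norm_mul, mul_pow]
      norm_num
      rw [hαn, ← h42]
      exact hfac)
  obtain ⟨z, hz, -⟩ := hens
  refine ⟨z, ?_⟩
  simp at hz
  exact sub_eq_zero.1 hz

/-- fibre of the (I,J)-set over `I` -/
def FI (a : ℤ_[p]) (k : ℕ) (I : ℤ_[p]) : Set ((ℤ_[p] × ℤ_[p]) × ℤ_[p]) :=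
  {x | ∃ J : ℤ_[p], ‖4 * I ^ 3 - J ^ 2‖ ≤ (p : ℝ) ^ (-(2 * k : ℕ) : ℤ) ∧
    64 * a ^ 3 * J = 48 * a ^ 2 * HH p a x.1 * I - HH p a x.1 ^ 3 - 27 * RR p a x ^ 2}

def FF (a : ℤ_[p]) (k : ℕ) : Set (((ℤ_[p] × ℤ_[p]) × ℤ_[p]) × ℤ_[p]) :=
  {y | y.1 ∈ FI p a k y.2}

lemma FF_closed (a : ℤ_[p]) (k : ℕ) : IsClosed (FF p a k) := by
  have hHc := HH_cont p a
  have hRc := RR_cont p a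
  let T : Set ((((ℤ_[p] × ℤ_[p]) × ℤ_[p]) × ℤ_[p]) × ℤ_[p]) :=
    {z | ‖4 * z.1.2 ^ 3 - z.2 ^ 2‖ ≤ (p : ℝ) ^ (-(2 * k : ℕ) : ℤ)} ∩
    {z | 64 * a ^ 3 * z.2 = 48 * a ^ 2 * HH p a z.1.1.1 * z.1.2 - HH p a z.1.1.1 ^ 3
        - 27 * RR p a z.1.1 ^ 2}
  have hT : IsClosed T := by
    refine IsClosed.inter (isClosed_le (by fun_prop) continuous_const) (isClosed_eq (by fun_prop) ?_)
    have h1 : Continuous fun z : (((ℤ_[p] × ℤ_[p]) × ℤ_[p]) × ℤ_[p]) × ℤ_[p] => HH p a z.1.1.1 :=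
      hHc.comp (by fun_prop)
    have h2 : Continuous fun z : (((ℤ_[p] × ℤ_[p]) × ℤ_[p]) × ℤ_[p]) × ℤ_[p] => RR p a z.1.1 :=
      hRc.comp (by fun_prop)
    fun_prop
  have : FF p a k = Prod.fst '' T := by
    ext y
    constructor
    · rintro ⟨J, h1, h2⟩
      exact ⟨(y, J), ⟨h1, h2⟩, rfl⟩
    · rintro ⟨⟨y, J⟩, ⟨h1, h2⟩, rfl⟩
      exact ⟨J, h1, h2⟩
  rw [this]
  exact (hT.isCompact.image continuous_fst).isClosed

lemma FI_B (a I : ℤ_[p]) (ha : a ≠ 0) (k : ℕ) (hak : (p : ℝ) ^ (-(2 * k : ℕ) : ℤ) ≤ ‖a‖)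
    (hI : (p : ℝ) ^ (-(2 * k : ℕ) : ℤ) < ‖(16 : ℤ_[p])‖ * ‖I‖ ^ 3) (hne : (FI p a k I).Nonempty) :
    ∃ α : ℤ_[p], α ≠ 0 ∧ α ^ 2 = I ∧
    mu3 p (FI p a k I) ≤ ENNReal.ofReal (3483648 * (3 * k + 1) * (p : ℝ) ^ (-(2 * k : ℕ) : ℤ)
      * (‖α‖ ^ 3)⁻¹ * (√‖α‖)⁻¹) := by
  obtain ⟨x0, J0, hJ0, -⟩ := hne
  obtain ⟨α, hα⟩ := sqrt_exists p I J0 (hJ0.trans_lt hI)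
  have hA : 0 < ‖a‖ := norm_pos_iff.2 ha
  have hp0 : (0:ℝ) < p := by exact_mod_cast hp.out.pos
  have hα0 : α ≠ 0 := by
    rintro rfl
    have : I = 0 := by rw [← hα]; simp
    rw [this] at hI; simp at hI
    exact absurd hI (not_lt.2 (by positivity))
  refine ⟨α, hα0, hα, ?_⟩
  have hαp : 0 < ‖α‖ := norm_pos_iff.2 hα0
  have hα1 := PadicInt.norm_le_one α
  have hA1 := PadicInt.norm_le_one a
  set q : ℝ := (p : ℝ) ^ (-(2 * k : ℕ) : ℤ) with hq
  have hq0 : 0 < q := by positivity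
  set E : ℝ := 4 * q * (‖α‖ ^ 3)⁻¹ * ‖a‖ ^ 3 with hE
  have hE0 : 0 < E := by positivity
  have hq3 : ((p : ℝ) ^ (-(3 * k : ℕ) : ℤ)) ^ 2 = q ^ 3 := by
    rw [hq, ← zpow_natCast, ← zpow_natCast, ← zpow_mul, ← zpow_mul]
    congr 1; push_cast; ring
  have hS : ∀ β : ℤ_[p], ‖β‖ = ‖α‖ → mu3 p {x | ‖27 * RR p a x ^ 2 +
        (HH p a x.1 - 4 * a * β) ^ 2 * (HH p a x.1 + 8 * a * β)‖ ≤ E} ≤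
      ENNReal.ofReal (1741824 * (3 * k + 1) * q * (‖α‖ ^ 3)⁻¹ * (√‖α‖)⁻¹) := by
    intro β hβ
    have hβ0 : β ≠ 0 := by rw [← norm_pos_iff, hβ]; exact hαp
    refine (caseB p a β ha hβ0 E hE0 (3 * k) ?_).trans ?_
    · rw [hq3, hβ]
      have h1 : ‖a‖ * ‖α‖ * q ^ 3 ≤ ‖a‖ * 1 * (q * (‖a‖ * ‖a‖)) := by
        have : q ^ 3 = q * (q * q) := by ring
        rw [this]
        gcongr
      have h2 : ‖a‖ * 1 * (q * (‖a‖ * ‖a‖)) = q * ‖a‖ ^ 3 := by ring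
      rw [h2] at h1
      refine h1.trans ?_
      have h3 : 1 ≤ (‖α‖ ^ 3)⁻¹ := (one_le_inv₀ (by positivity)).2 (pow_le_one₀ hαp.le hα1)
      have : 0 < q * ‖a‖ ^ 3 := by positivity
      rw [hE]
      nlinarith
    · apply ENNReal.ofReal_le_ofReal
      apply le_of_eq
      rw [hE, hβ]
      push_cast
      field_simp
      ring
  have hsub : FI p a k I ⊆
      {x | ‖27 * RR p a x ^ 2 + (HH p a x.1 - 4 * a * α) ^ 2 * (HH p a x.1 + 8 * a * α)‖ ≤ E} ∪
      {x | ‖27 * RR p a x ^ 2 +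
        (HH p a x.1 - 4 * a * (-α)) ^ 2 * (HH p a x.1 + 8 * a * (-α))‖ ≤ E} := by
    rintro x ⟨J, hJ1, hJ2⟩
    have hfac : ‖2 * α ^ 3 - J‖ * ‖2 * α ^ 3 + J‖ ≤ q := by
      rw [← norm_mul]
      refine le_trans (le_of_eq ?_) hJ1
      congr 1
      rw [← hα]; ring
    have hmx : ‖α‖ ^ 3 / 4 ≤ max ‖2 * α ^ 3 - J‖ ‖2 * α ^ 3 + J‖ := by
      have h1 := PadicInt.nonarchimedean (2 * α ^ 3 - J) (2 * α ^ 3 + J)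
      rw [show 2 * α ^ 3 - J + (2 * α ^ 3 + J) = 4 * α ^ 3 by ring, norm_mul, norm_pow] at h1
      refine le_trans ?_ h1
      have := norm_four_ge p
      have : 0 < ‖α‖ ^ 3 := by positivity
      nlinarith
    have hα3 : 0 < ‖α‖ ^ 3 := by positivity
    have h64 := PadicInt.norm_le_one (64 : ℤ_[p])
    have hfin : ∀ w : ℤ_[p], ‖w‖ * (‖α‖ ^ 3 / 4) ≤ q → ‖64 * a ^ 3 * w‖ ≤ E := by
      intro w hw
      have hw2 : ‖w‖ ≤ 4 * q * (‖α‖ ^ 3)⁻¹ := by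
        rw [← div_eq_mul_inv, le_div_iff₀ hα3]; linarith
      rw [norm_mul, norm_mul, norm_pow]
      calc _ ≤ 1 * ‖a‖ ^ 3 * (4 * q * (‖α‖ ^ 3)⁻¹) := by gcongr
        _ = E := by rw [hE]; ring
    rcases le_max_iff.1 hmx with h | h
    · right
      have := hfin (2 * α ^ 3 + J) (by nlinarith [norm_nonneg (2 * α ^ 3 + J)])
      simp only [mem_ofPred_eq]
      have e : 27 * RR p a x ^ 2 + (HH p a x.1 - 4 * a * (-α)) ^ 2 * (HH p a x.1 + 8 * a * (-α))
          = -(64 * a ^ 3 * (2 * α ^ 3 + J)) := by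
        subst hα; linear_combination hJ2
      rw [e, norm_neg]; exact this
    · left
      have := hfin (2 * α ^ 3 - J) (by nlinarith [norm_nonneg (2 * α ^ 3 - J)])
      simp only [mem_ofPred_eq]
      have e : 27 * RR p a x ^ 2 + (HH p a x.1 - 4 * a * α) ^ 2 * (HH p a x.1 + 8 * a * α)
          = 64 * a ^ 3 * (2 * α ^ 3 - J) := by
        subst hα; linear_combination hJ2
      rw [e]; exact this
  refine (measure_mono hsub).trans ((measure_union_le _ _).trans ?_)
  refine (add_le_add (hS α rfl) (hS (-α) (norm_neg α))).trans ?_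
  rw [← ENNReal.ofReal_add (by positivity) (by positivity)]
  apply ENNReal.ofReal_le_ofReal
  apply le_of_eq; ring

end DD

section EE
variable (p : ℕ) [hp : Fact p.Prime]

lemma geom_le (x : ℝ) (hx : 2 ≤ x) (N : ℕ) : ∑ i ∈ Finset.range (N + 1), x ^ i ≤ 2 * x ^ N := by
  induction N with
  | zero => simp
  | succ n ih =>
    rw [Finset.sum_range_succ]
    have : 0 < x ^ n := by positivity
    have e : x ^ (n + 1) = x * x ^ n := by ring
    rw [e]; nlinarith

lemma FF_bound (a : ℤ_[p]) (ha : a ≠ 0) (k : ℕ) 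
    (hak : (p : ℝ) ^ (-(2 * k : ℕ) : ℤ) ≤ ‖a‖) (CA ρ : ℝ) (hCA : 0 ≤ CA) (hρ : 0 < ρ)
    (hA : ∀ I : ℤ_[p], ‖(16 : ℤ_[p])‖ * ‖I‖ ^ 3 ≤ (p : ℝ) ^ (-(2 * k : ℕ) : ℤ) →
      (FI p a k I).Nonempty →
      ‖I‖ ≤ ρ ∧ mu3 p (FI p a k I) ≤ ENNReal.ofReal CA) :
    (mu3 p).prod (mu p) (FF p a k) ≤ ENNReal.ofReal (CA * ρ +
      6967296 * (3 * k + 1) * (p : ℝ) ^ (-(2 * k : ℕ) : ℤ) * (p * √p) ^ ((k - 1) / 3)) := by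
  have hp0 : (0:ℝ) < p := by exact_mod_cast hp.out.pos
  have hp1 : (1:ℝ) < p := by exact_mod_cast hp.out.one_lt
  have hp2 : (2:ℝ) ≤ p := by exact_mod_cast hp.out.two_le
  have hsp : 1 ≤ √(p:ℝ) := Real.one_le_sqrt.2 hp1.le
  set q : ℝ := (p : ℝ) ^ (-(2 * k : ℕ) : ℤ) with hq
  have hq0 : 0 < q := by positivity
  set N := (k - 1) / 3 with hN
  let c : ℕ → ℝ := fun i => 3483648 * (3 * k + 1) * q * ((p : ℝ) ^ i) ^ 3 * (√p) ^ i
  have hc : ∀ i, 0 ≤ c i := fun i => by positivity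
  have hpt : ∀ I : ℤ_[p], mu3 p (FI p a k I) ≤
      {I : ℤ_[p] | ‖I - 0‖ ≤ ρ}.indicator (fun _ => ENNReal.ofReal CA) I +
      ∑ i ∈ Finset.range (N + 1),
        {I : ℤ_[p] | ‖I - 0‖ ≤ (((p : ℝ) ^ i) ^ 2)⁻¹}.indicator
          (fun _ => ENNReal.ofReal (c i)) I := by
    intro I
    by_cases hne : (FI p a k I).Nonempty
    · rcases le_or_gt (‖(16 : ℤ_[p])‖ * ‖I‖ ^ 3) q with h | h
      · obtain ⟨h1, h2⟩ := hA I h hne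
        refine h2.trans (le_trans ?_ le_self_add)
        rw [indicator_of_mem (by simpa using h1)]
      · obtain ⟨α, hα0, hα, hb⟩ := FI_B p a I ha k hak h hne
        have hv := PadicInt.norm_eq_zpow_neg_valuation hα0
        set i := α.valuation with hi
        have hv' : ‖α‖ = ((p : ℝ) ^ i)⁻¹ := by rw [hv, zpow_neg, zpow_natCast]
        have hI : ‖I‖ = (((p : ℝ) ^ i) ^ 2)⁻¹ := by rw [← hα, norm_pow, hv', inv_pow]
        have hik : 3 * i < k := by
          have h1 : q < ‖I‖ ^ 3 := h.trans_le
            (mul_le_of_le_one_left (by positivity) (PadicInt.norm_le_one _))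
          rw [hI, hq, zpow_neg, zpow_natCast, inv_pow, ← pow_mul, ← pow_mul,
            inv_lt_inv₀ (by positivity) (by positivity)] at h1
          have := (pow_lt_pow_iff_right₀ hp1).1 h1
          omega
        have hiN : i ∈ Finset.range (N + 1) := by rw [Finset.mem_range]; omega
        refine hb.trans (le_trans ?_ (le_add_left (Finset.single_le_sum
          (f := fun i => {I : ℤ_[p] | ‖I - 0‖ ≤ (((p : ℝ) ^ i) ^ 2)⁻¹}.indicator
          (fun _ => ENNReal.ofReal (c i)) I) (fun _ _ => zero_le) hiN)))
        rw [indicator_of_mem (by simp [hI])]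
        apply ENNReal.ofReal_le_ofReal
        apply le_of_eq
        simp only [c]
        rw [hv', Real.sqrt_inv, inv_pow, inv_inv, inv_inv]
        congr 1
        rw [Real.sqrt_eq_iff_mul_self_eq (by positivity) (by positivity), ← mul_pow,
          Real.mul_self_sqrt hp0.le]
    · rw [not_nonempty_iff_eq_empty.1 hne]; simp
  rw [Measure.prod_apply_symm (FF_closed p a k).measurableSet]
  have hms : ∀ s : ℝ, MeasurableSet {I : ℤ_[p] | ‖I - 0‖ ≤ s} := fun s =>
    (isClosed_le (by fun_prop) continuous_const).measurableSet
  calc _ ≤ ∫⁻ I, ({I : ℤ_[p] | ‖I - 0‖ ≤ ρ}.indicator (fun _ => ENNReal.ofReal CA) I +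
      ∑ i ∈ Finset.range (N + 1),
        {I : ℤ_[p] | ‖I - 0‖ ≤ (((p : ℝ) ^ i) ^ 2)⁻¹}.indicator
          (fun _ => ENNReal.ofReal (c i)) I) ∂(mu p) := lintegral_mono hpt
    _ = ENNReal.ofReal CA * mu p {I : ℤ_[p] | ‖I - 0‖ ≤ ρ} + ∑ i ∈ Finset.range (N + 1),
          ENNReal.ofReal (c i) * mu p {I : ℤ_[p] | ‖I - 0‖ ≤ (((p : ℝ) ^ i) ^ 2)⁻¹} := by
        rw [lintegral_add_left (measurable_const.indicator (hms _)),
          lintegral_indicator_const (hms _), lintegral_finsetSum]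
        · congr 1
          refine Finset.sum_congr rfl fun i _ => ?_
          rw [lintegral_indicator_const (hms _)]
        · intro i _
          exact measurable_const.indicator (hms _)
    _ ≤ ENNReal.ofReal CA * ENNReal.ofReal ρ + ∑ i ∈ Finset.range (N + 1),
          ENNReal.ofReal (c i) * ENNReal.ofReal ((((p : ℝ) ^ i) ^ 2)⁻¹) := by
        gcongr
        · exact mu_ball p 0 _ hρ
        · exact mu_ball p 0 _ (by positivity)
    _ = ENNReal.ofReal (CA * ρ + ∑ i ∈ Finset.range (N + 1), c i * (((p : ℝ) ^ i) ^ 2)⁻¹) := by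
        rw [ENNReal.ofReal_add (by positivity) (Finset.sum_nonneg fun i _ => by
          have := hc i; positivity), ENNReal.ofReal_mul hCA, ENNReal.ofReal_sum_of_nonneg
          (fun i _ => by have := hc i; positivity)]
        congr 1
        refine Finset.sum_congr rfl fun i _ => ?_
        rw [ENNReal.ofReal_mul (hc i)]
    _ ≤ _ := by
        apply ENNReal.ofReal_le_ofReal
        gcongr
        have e : ∀ i ∈ Finset.range (N + 1), c i * (((p : ℝ) ^ i) ^ 2)⁻¹ =
            3483648 * (3 * k + 1) * q * (p * √p) ^ i := by
          intro i _
          simp only [c]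
          rw [mul_pow]
          field_simp
        rw [Finset.sum_congr rfl e, ← Finset.mul_sum]
        have := geom_le ((p:ℝ) * √p) (by nlinarith) N
        calc _ ≤ 3483648 * (3 * k + 1) * q * (2 * (p * √p) ^ N) := by gcongr
          _ = _ := by ring

/-- the set of `(b,c,d,e)` with `p^j ∣ Δ` -/
def DS (a : ℤ_[p]) (j : ℕ) : Set (((ℤ_[p] × ℤ_[p]) × ℤ_[p]) × ℤ_[p]) :=
  {y | (p : ℤ_[p]) ^ j ∣ (BQ.disc ⟨a, y.1.1.1, y.1.1.2, y.1.2, y.2⟩)}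

lemma dvd_pow_norm (j : ℕ) (x : ℤ_[p]) : (p : ℤ_[p]) ^ j ∣ x ↔ ‖x‖ ≤ (p : ℝ) ^ (-j : ℤ) := by
  rw [dvd_iff_norm p _ _ (pow_ne_zero _ (by exact_mod_cast hp.out.ne_zero)), PadicInt.norm_p_pow]

lemma DS_closed (a : ℤ_[p]) (j : ℕ) : IsClosed (DS p a j) := by
  unfold DS
  simp only [dvd_pow_norm, BQ.disc]
  exact isClosed_le (by fun_prop) continuous_const

lemma DS_le (a : ℤ_[p]) (ha : a ≠ 0) (k : ℕ) :
    (mu3 p).prod (mu p) (DS p a (2 * k)) ≤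
      ENNReal.ofReal (12 * ‖a‖⁻¹) * (mu3 p).prod (mu p) (FF p a k) := by
  have hA : 0 < ‖a‖ := norm_pos_iff.2 ha
  have h12 : (1/12 : ℝ) ≤ ‖(12 : ℤ_[p])‖ := by
    have := norm_nat_ge p 12 (by norm_num); norm_num at this ⊢; exact this
  have hc : (12 * a : ℤ_[p]) ≠ 0 := by
    refine mul_ne_zero ?_ ha
    intro h; rw [h, norm_zero] at h12; norm_num at h12
  have hmF := (FF_closed p a k).measurableSet
  rw [Measure.prod_apply (DS_closed p a _).measurableSet,
    Measure.prod_apply hmF,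
    ← lintegral_const_mul _ (measurable_measure_prodMk_left hmF)]
  apply lintegral_mono
  rintro ⟨⟨b, c⟩, d⟩
  have hml := mu_lin p (12 * a) (c ^ 2 - 3 * b * d) hc (Prod.mk ((b, c), d) ⁻¹' (FF p a k))
    (measurable_prodMk_left hmF)
  refine (measure_mono ?_).trans (hml.trans ?_)
  · intro e he
    have he' : ‖BQ.disc ⟨a, b, c, d, e⟩‖ ≤ (p : ℝ) ^ (-(2 * k : ℕ) : ℤ) :=
      (dvd_pow_norm p _ _).1 he
    refine ⟨BQ.invJ ⟨a, b, c, d, e⟩, ?_, ?_⟩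
    · have e1 : 4 * (12 * a * e + (c ^ 2 - 3 * b * d)) ^ 3 - BQ.invJ ⟨a, b, c, d, e⟩ ^ 2
        = 27 * BQ.disc ⟨a, b, c, d, e⟩ := by
        simp only [BQ.invJ, BQ.disc]; ring
      simp only [e1, norm_mul]
      exact (mul_le_of_le_one_left (norm_nonneg _) (PadicInt.norm_le_one _)).trans he'
    · simp only [BQ.invJ, HH, RR]; ring
  · refine mul_le_mul_left (ENNReal.ofReal_le_ofReal ?_) _
    rw [norm_mul, mul_inv]
    gcongr
    rw [inv_le_comm₀ (by linarith) (by norm_num)]; linarith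

end EE

section GG
variable (p : ℕ) [hp : Fact p.Prime]

lemma FI_A (a I : ℤ_[p]) (ha : a ≠ 0) (k : ℕ) (E B r : ℝ) (hE : 0 < E) (hB : 0 < B) (hr : 0 < r)
    (n : ℕ) (hI : ‖a‖ ^ 2 * ‖I‖ < B ^ 2) (hn : (p : ℝ) ^ (-n : ℤ) ≤ B)
    (hBr : ∀ x : ℤ_[p], ‖x‖ < B → ‖x‖ ≤ r)
    (hJ : ∀ J : ℤ_[p], ‖4 * I ^ 3 - J ^ 2‖ ≤ (p : ℝ) ^ (-(2 * k : ℕ) : ℤ) → ‖a‖ ^ 3 * ‖J‖ ≤ E) :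
    mu3 p (FI p a k I) ≤ ENNReal.ofReal (72576 * (‖a‖ ^ 2)⁻¹ * (√‖a‖)⁻¹ *
          ((n + 1) * E * (√B)⁻¹ + √E * r)) := by
  refine (measure_mono ?_).trans (caseA p a I ha E B r hE hB hr n hI hn hBr)
  rintro x ⟨J, hJ1, hJ2⟩
  have e : 27 * RR p a x ^ 2 + (HH p a x.1 ^ 3 - 48 * a ^ 2 * HH p a x.1 * I)
      = -(64 * (a ^ 3 * J)) := by linear_combination hJ2
  simp only [mem_ofPred_eq]
  rw [e, norm_neg, norm_mul, norm_mul, norm_pow]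
  exact (mul_le_of_le_one_left (by positivity) (PadicInt.norm_le_one _)).trans (hJ J hJ1)

lemma J_sq (I J : ℤ_[p]) (q : ℝ) (h : ‖4 * I ^ 3 - J ^ 2‖ ≤ q) (h2 : ‖4 * I ^ 3‖ ≤ q) :
    ‖J‖ ^ 2 ≤ q := by
  have := ultra_sub p (4 * I ^ 3) (4 * I ^ 3 - J ^ 2)
  rw [sub_sub_cancel, norm_pow] at this
  exact this.trans (max_le h2 h)

lemma DS_big (a : ℤ_[p]) (ha : a ≠ 0) (k : ℕ) (hk : 1 ≤ k)
    (hak : (p : ℝ) ^ (-(2 * k : ℕ) : ℤ) ≤ ‖a‖) :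
    (mu3 p).prod (mu p) (DS p a (2 * k)) ≤
      ENNReal.ofReal (376233984 * (k * (‖a‖⁻¹ * (p : ℝ) ^ (-(3 * (k : ℝ) / 2))))) := by
  have hA : 0 < ‖a‖ := norm_pos_iff.2 ha
  have hp0 : (0:ℝ) < p := by exact_mod_cast hp.out.pos
  have hp1 : (1:ℝ) < p := by exact_mod_cast hp.out.one_lt
  obtain ⟨s, hs⟩ : ∃ s : ℝ, s = (p : ℝ) ^ (-(k : ℝ) / 6) := ⟨_, rfl⟩
  have hs0 : 0 < s := by rw [hs]; positivity
  have hs1 : s ≤ 1 := by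
    rw [hs]; apply Real.rpow_le_one_of_one_le_of_nonpos hp1.le
    have : (0:ℝ) ≤ k := by positivity
    linarith
  have hspow : ∀ n : ℕ, s ^ n = (p : ℝ) ^ (-(k : ℝ) / 6 * n) := by
    intro n; rw [hs, ← Real.rpow_natCast, ← Real.rpow_mul hp0.le]
  have hzp : ∀ n : ℕ, s ^ (6 * n) = (p : ℝ) ^ (-(n * k : ℕ) : ℤ) := by
    intro n; rw [hspow, ← Real.rpow_intCast]; congr 1; push_cast; ring
  have hq : (p : ℝ) ^ (-(2 * k : ℕ) : ℤ) = s ^ 12 := (hzp 2).symm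
  have h9 : (p : ℝ) ^ (-(3 * (k : ℝ) / 2)) = s ^ 9 := by
    rw [hspow]; congr 1; push_cast; ring
  rw [hq] at hak
  rw [h9]
  obtain ⟨x, hx⟩ : ∃ x : ℝ, x = √‖a‖ := ⟨_, rfl⟩
  have hx0 : 0 < x := by rw [hx]; positivity
  have hxa : ‖a‖ = x ^ 2 := by rw [hx, Real.sq_sqrt hA.le]
  have hk1 : (1:ℝ) ≤ k := by exact_mod_cast hk
  have hFF := FF_bound p a ha k (by rw [hq]; exact hak) (72576 * (6 * k + 10) * s ^ 5) (3 * s ^ 4)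
    (by positivity) (by positivity) ?_
  · refine (DS_le p a ha k).trans ((mul_le_mul_right hFF _).trans ?_)
    rw [← ENNReal.ofReal_mul (by positivity)]
    apply ENNReal.ofReal_le_ofReal
    rw [hq]
    have hN : s ^ 3 * ((p:ℝ) * √p) ^ ((k - 1) / 3) ≤ 1 := by
      rw [← sq_le_one_iff₀ (by positivity)]
      have e : (s ^ 3 * ((p:ℝ) * √p) ^ ((k - 1) / 3)) ^ 2
          = s ^ 6 * ((p:ℝ) ^ 2 * √p ^ 2) ^ ((k - 1) / 3) := by
        rw [← mul_pow (p:ℝ) (√p) 2, mul_pow (s ^ 3), ← pow_mul s, pow_right_comm]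
      rw [e, Real.sq_sqrt hp0.le, ← pow_succ, ← pow_mul]
      have h6 := hzp 1
      rw [mul_one, one_mul] at h6
      rw [h6, zpow_neg, zpow_natCast, inv_mul_le_iff₀ (by positivity), mul_one]
      apply pow_le_pow_right₀ hp1.le
      omega
    have h12 : s ^ 12 * ((p:ℝ) * √p) ^ ((k - 1) / 3) ≤ s ^ 9 := by
      calc _ = s ^ 9 * (s ^ 3 * ((p:ℝ) * √p) ^ ((k - 1) / 3)) := by ring
        _ ≤ s ^ 9 * 1 := by gcongr
        _ = _ := mul_one _
    calc _ = 12 * ‖a‖⁻¹ * (217728 * (6 * k + 10) * s ^ 9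
          + 6967296 * (3 * k + 1) * (s ^ 12 * ((p:ℝ) * √p) ^ ((k - 1) / 3))) := by ring
      _ ≤ 12 * ‖a‖⁻¹ * (217728 * (6 * k + 10 * k) * s ^ 9
          + 6967296 * (3 * k + k) * s ^ 9) := by
          gcongr
          linarith
      _ = _ := by ring
  · intro I hI _
    rw [hq] at hI
    have h16 : (1/16 : ℝ) ≤ ‖(16 : ℤ_[p])‖ := by
      have := norm_nat_ge p 16 (by norm_num); norm_num at this ⊢; exact this
    have h4 := norm_four_ge p
    have h164 : ‖(16 : ℤ_[p])‖ = ‖(4 : ℤ_[p])‖ ^ 2 := by rw [← norm_pow]; norm_num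
    have hI0 : 0 ≤ ‖I‖ ^ 3 := by positivity
    have hs12 : 0 < s ^ 12 := by positivity
    have hIρ : ‖I‖ ≤ 3 * s ^ 4 := by
      refine (pow_le_pow_iff_left₀ (norm_nonneg _) (by positivity) (n := 3) (by norm_num)).1 ?_
      rw [mul_pow, ← pow_mul]
      norm_num
      nlinarith
    refine ⟨hIρ, ?_⟩
    refine (FI_A p a I ha k (4 * ‖a‖ ^ 3 * s ^ 6) (4 * ‖a‖ * s ^ 2) (4 * ‖a‖ * s ^ 2)
      (by positivity) (by positivity) (by positivity) (3 * k) ?_ ?_ (fun _ h => h.le) ?_).trans ?_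
    · calc ‖a‖ ^ 2 * ‖I‖ ≤ ‖a‖ ^ 2 * (3 * s ^ 4) := by gcongr
        _ < ‖a‖ ^ 2 * (16 * s ^ 4) := by gcongr; norm_num
        _ = _ := by ring
    · rw [← hzp 3]
      calc s ^ (6 * 3) = s ^ 12 * s ^ 2 * s ^ 4 := by ring
        _ ≤ ‖a‖ * s ^ 2 * 1 := by gcongr; exact pow_le_one₀ hs0.le hs1
        _ ≤ _ := by nlinarith [mul_pos hA (pow_pos hs0 2)]
    · intro J hJ
      rw [hq] at hJ
      have hJ2 := J_sq p I J (4 * s ^ 12) (hJ.trans (by linarith)) (by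
        rw [norm_mul, norm_pow]
        rw [h164] at hI
        nlinarith [mul_nonneg (norm_nonneg (4 : ℤ_[p])) hI0])
      have : ‖J‖ ≤ 2 * s ^ 6 := by
        refine (pow_le_pow_iff_left₀ (norm_nonneg _) (by positivity) (n := 2) (by norm_num)).1 ?_
        refine hJ2.trans (le_of_eq ?_); ring
      calc ‖a‖ ^ 3 * ‖J‖ ≤ ‖a‖ ^ 3 * (2 * s ^ 6) := by gcongr
        _ ≤ _ := by nlinarith [mul_pos (pow_pos hA 3) (pow_pos hs0 6)]
    · apply ENNReal.ofReal_le_ofReal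
      rw [hxa]
      have e1 : √(x ^ 2) = x := Real.sqrt_sq hx0.le
      have e2 : √(4 * x ^ 2 * s ^ 2) = 2 * x * s := by
        rw [show 4 * x ^ 2 * s ^ 2 = (2 * x * s) ^ 2 by ring, Real.sqrt_sq (by positivity)]
      have e3 : √(4 * (x ^ 2) ^ 3 * s ^ 6) = 2 * x ^ 3 * s ^ 3 := by
        rw [show 4 * (x ^ 2) ^ 3 * s ^ 6 = (2 * x ^ 3 * s ^ 3) ^ 2 by ring,
          Real.sqrt_sq (by positivity)]
      rw [e1, e2, e3]
      apply le_of_eq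
      push_cast
      field_simp
      ring

lemma norm_unit_nat (n : ℕ) (hn : ¬ p ∣ n) : ‖(n : ℤ_[p])‖ = 1 := by
  have h1 := PadicInt.norm_le_one (n : ℤ_[p])
  refine le_antisymm h1 (not_lt.1 fun h => hn ?_)
  have := (PadicInt.norm_int_lt_one_iff_dvd (p := p) (n : ℤ)).1 (by simpa using h)
  exact_mod_cast this

lemma DS_small (h5 : 5 ≤ p) (a : ℤ_[p]) (ha : a ≠ 0) (k : ℕ) (hk : 1 ≤ k) (hk2 : k ≤ 2)
    (hak : (p : ℝ) ^ (-(2 * k : ℕ) : ℤ) ≤ ‖a‖) :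
    (mu3 p).prod (mu p) (DS p a (2 * k)) ≤
      ENNReal.ofReal (590478336 * (‖a‖⁻¹ * (p : ℝ) ^ (-(2 * k : ℕ) : ℤ))) := by
  have hA : 0 < ‖a‖ := norm_pos_iff.2 ha
  have hp0 : (0:ℝ) < p := by exact_mod_cast hp.out.pos
  have hp1 : (1:ℝ) < p := by exact_mod_cast hp.out.one_lt
  obtain ⟨w, hw⟩ : ∃ w : ℝ, w = √((p : ℝ) ^ (-k : ℤ)) := ⟨_, rfl⟩
  have ht0 : 0 < (p : ℝ) ^ (-k : ℤ) := by positivity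
  have hw0 : 0 < w := by rw [hw]; positivity
  have hwt : (p : ℝ) ^ (-k : ℤ) = w ^ 2 := by rw [hw, Real.sq_sqrt ht0.le]
  have hq : (p : ℝ) ^ (-(2 * k : ℕ) : ℤ) = w ^ 4 := by
    rw [show w ^ 4 = (w ^ 2) ^ 2 by ring, ← hwt, ← zpow_natCast, ← zpow_mul]
    congr 1; push_cast; ring
  have hpw : 1 / (p:ℝ) ≤ w := by
    refine (pow_le_pow_iff_left₀ (by positivity) hw0.le (n := 2) (by norm_num)).1 ?_
    rw [← hwt, zpow_neg, zpow_natCast, one_div, inv_pow]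
    gcongr
    exact hp1.le
  have hw1 : w ^ 2 < 1 := by
    rw [← hwt, zpow_neg, zpow_natCast]
    exact inv_lt_one_of_one_lt₀ (one_lt_pow₀ hp1 (by omega))
  have h16 : ‖(16 : ℤ_[p])‖ = 1 := by
    have := norm_unit_nat p 16 (fun h => by
      have := (Nat.prime_dvd_prime_iff_eq hp.out Nat.prime_two).1
        (hp.out.dvd_of_dvd_pow (show p ∣ 2 ^ 4 from h))
      omega)
    exact_mod_cast this
  obtain ⟨x, hx⟩ : ∃ x : ℝ, x = √‖a‖ := ⟨_, rfl⟩
  have hx0 : 0 < x := by rw [hx]; positivity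
  have hxa : ‖a‖ = x ^ 2 := by rw [hx, Real.sq_sqrt hA.le]
  have hk2' : (k:ℝ) ≤ 2 := by exact_mod_cast hk2
  have hFF := FF_bound p a ha k hak (435456 * w ^ 2) (w ^ 2) (by positivity) (by positivity) ?_
  · refine (DS_le p a ha k).trans ((mul_le_mul_right hFF _).trans ?_)
    rw [← ENNReal.ofReal_mul (by positivity)]
    apply ENNReal.ofReal_le_ofReal
    have hN : (k - 1) / 3 = 0 := by omega
    rw [hq, hN, pow_zero]
    calc _ ≤ 12 * ‖a‖⁻¹ * (435456 * w ^ 2 * w ^ 2 + 6967296 * (3 * 2 + 1) * w ^ 4 * 1) := by gcongr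
      _ = _ := by ring
  · intro I hI _
    rw [h16, one_mul] at hI
    have hIρ : ‖I‖ ≤ (p : ℝ) ^ (-k : ℤ) := by
      by_cases hI0 : I = 0
      · rw [hI0, norm_zero]; exact ht0.le
      rw [PadicInt.norm_eq_zpow_neg_valuation hI0] at hI ⊢
      rw [zpow_neg, zpow_neg, zpow_natCast, zpow_natCast, inv_pow, ← pow_mul,
        inv_le_inv₀ (by positivity) (by positivity)] at hI
      have h3 := (pow_le_pow_iff_right₀ hp1).1 hI
      apply zpow_le_zpow_right₀ hp1.le
      omega
    rw [hwt] at hIρ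
    refine ⟨hIρ, ?_⟩
    refine (FI_A p a I ha k (‖a‖ ^ 3 * w ^ 2) ‖a‖ (‖a‖ * (1 / p))
      (by positivity) (by positivity) (by positivity) (2 * k) ?_ hak ?_ ?_).trans ?_
    · calc ‖a‖ ^ 2 * ‖I‖ ≤ ‖a‖ ^ 2 * w ^ 2 := by gcongr
        _ < ‖a‖ ^ 2 * 1 := by gcongr
        _ = _ := by ring
    · intro y hy
      rw [PadicInt.norm_eq_zpow_neg_valuation ha] at hy ⊢
      rw [show (p : ℝ) ^ (-(a.valuation : ℤ)) * (1 / p) = (p : ℝ) ^ (-(a.valuation : ℤ) - 1) by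
        rw [zpow_sub_one₀ hp0.ne', one_div]]
      rw [PadicInt.norm_le_pow_iff_norm_lt_pow_add_one]
      simpa using hy
    · intro J hJ
      have hJ2 := J_sq p I J _ hJ (by
        rw [norm_mul, norm_pow]
        exact (mul_le_of_le_one_left (by positivity) (PadicInt.norm_le_one _)).trans hI)
      have : ‖J‖ ≤ w ^ 2 := by
        refine (pow_le_pow_iff_left₀ (norm_nonneg _) (by positivity) (n := 2) (by norm_num)).1 ?_
        refine hJ2.trans (le_of_eq ?_); rw [hq]; ring
      gcongr
    · apply ENNReal.ofReal_le_ofReal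
      rw [hxa]
      have e1 : √(x ^ 2) = x := Real.sqrt_sq hx0.le
      have e3 : √((x ^ 2) ^ 3 * w ^ 2) = x ^ 3 * w := by
        rw [show (x ^ 2) ^ 3 * w ^ 2 = (x ^ 3 * w) ^ 2 by ring, Real.sqrt_sq (by positivity)]
      rw [e1, e3]
      push_cast
      calc _ = 72576 * ((2 * k + 1) * w ^ 2 + w * (1 / p)) := by field_simp
        _ ≤ 72576 * ((2 * 2 + 1) * w ^ 2 + w * w) := by gcongr
        _ = _ := by ring

end GG

section JJ
variable (p : ℕ) [hp : Fact p.Prime]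

noncomputable def qA (a : ℤ_[p]) (x : (ℤ_[p] × ℤ_[p]) × ℤ_[p]) : ℤ_[p] :=
  -(27 * x.1.1 ^ 4) + a * (144 * x.1.1 ^ 2 * x.1.2)
noncomputable def qB (a : ℤ_[p]) (x : (ℤ_[p] × ℤ_[p]) × ℤ_[p]) : ℤ_[p] :=
  (18 * x.1.1 ^ 3 * x.1.2 * x.2 - 4 * x.1.1 ^ 2 * x.1.2 ^ 3) +
    a * (-6 * x.1.1 ^ 2 * x.2 ^ 2 - 80 * x.1.1 * x.1.2 ^ 2 * x.2 + 16 * x.1.2 ^ 4)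
noncomputable def qC (a : ℤ_[p]) (x : (ℤ_[p] × ℤ_[p]) × ℤ_[p]) : ℤ_[p] :=
  (x.1.1 ^ 2 * x.1.2 ^ 2 * x.2 ^ 2 - 4 * x.1.1 ^ 3 * x.2 ^ 3) +
    a * (18 * x.1.1 * x.1.2 * x.2 ^ 3 - 4 * x.1.2 ^ 3 * x.2 ^ 2)
noncomputable def qT (a : ℤ_[p]) (x : (ℤ_[p] × ℤ_[p]) × ℤ_[p]) : ℤ_[p] :=
  qB p a x ^ 2 - 4 * qA p a x * qC p a x

lemma qA_cont (a : ℤ_[p]) : Continuous (qA p a) := by unfold qA; fun_prop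
lemma qB_cont (a : ℤ_[p]) : Continuous (qB p a) := by unfold qB; fun_prop
lemma qT_cont (a : ℤ_[p]) : Continuous (qT p a) := by
  unfold qT qA qB qC; fun_prop

lemma norm_dich (x : ℤ_[p]) : ‖x‖ = 1 ∨ ‖x‖ ≤ (p : ℝ)⁻¹ := by
  rcases (PadicInt.norm_le_one x).eq_or_lt with h | h
  · exact Or.inl h
  · right
    have := (PadicInt.norm_le_pow_iff_norm_lt_pow_add_one x (-1)).2 (by simpa using h)
    simpa using this

lemma norm_smooth (h5 : 5 ≤ p) (i j : ℕ) : ‖((2 ^ i * 3 ^ j : ℕ) : ℤ_[p])‖ = 1 := by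
  apply norm_unit_nat
  intro h
  rcases hp.out.dvd_mul.1 h with h | h
  · have := (Nat.prime_dvd_prime_iff_eq hp.out Nat.prime_two).1 (hp.out.dvd_of_dvd_pow h)
    omega
  · have := (Nat.prime_dvd_prime_iff_eq hp.out Nat.prime_three).1 (hp.out.dvd_of_dvd_pow h)
    omega

lemma qA_norm (h5 : 5 ≤ p) (a : ℤ_[p]) (ha : ‖a‖ < 1) (x : (ℤ_[p] × ℤ_[p]) × ℤ_[p])
    (hb : ‖x.1.1‖ = 1) : ‖2 * qA p a x‖ = 1 := by
  have h2 : ‖(2 : ℤ_[p])‖ = 1 := by simpa using norm_smooth p h5 1 0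
  have h27 : ‖(27 : ℤ_[p])‖ = 1 := by
    have := norm_smooth p h5 0 3; norm_num at this; exact this
  have e1 : ‖-(27 * x.1.1 ^ 4)‖ = 1 := by rw [norm_neg, norm_mul, norm_pow, h27, hb]; norm_num
  have e2 : ‖a * (144 * x.1.1 ^ 2 * x.1.2)‖ < 1 := by
    rw [norm_mul]
    exact (mul_le_of_le_one_right (norm_nonneg _) (PadicInt.norm_le_one _)).trans_lt ha
  rw [norm_mul, h2, one_mul, qA, PadicInt.norm_add_eq_max_of_ne (by rw [e1]; exact e2.ne'), e1,
    max_eq_left e2.le]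

lemma q_fib (h5 : 5 ≤ p) (a : ℤ_[p]) (ha : ‖a‖ < 1) (x : (ℤ_[p] × ℤ_[p]) × ℤ_[p])
    (hb : ‖x.1.1‖ = 1) :
    mu p {e | ‖(2 * qA p a x * e + qB p a x) ^ 2 - qT p a x‖ ≤ ((p : ℝ)⁻¹) ^ 2} ≤
      ENNReal.ofReal (4 * ((p : ℝ)⁻¹) ^ 2 / max (√‖qT p a x‖) ((p : ℝ)⁻¹)) := by
  have hp0 : (0:ℝ) < p := by exact_mod_cast hp.out.pos
  have hn := qA_norm p h5 a ha x hb
  have := mu_sq p (2 * qA p a x) (qB p a x) (qT p a x) (by rw [← norm_pos_iff, hn]; norm_num)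
    (((p : ℝ)⁻¹) ^ 2) (by positivity)
  rwa [hn, inv_one, mul_one, Real.sqrt_sq (by positivity)] at this

lemma q_fib1 (h5 : 5 ≤ p) (a : ℤ_[p]) (ha : ‖a‖ < 1) (x : (ℤ_[p] × ℤ_[p]) × ℤ_[p])
    (hb : ‖x.1.1‖ = 1) :
    mu p {e | ‖(2 * qA p a x * e + qB p a x) ^ 2 - qT p a x‖ ≤ ((p : ℝ)⁻¹) ^ 2} ≤
      ENNReal.ofReal (4 * (p : ℝ)⁻¹) := by
  have hp0 : (0:ℝ) < p := by exact_mod_cast hp.out.pos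
  refine (q_fib p h5 a ha x hb).trans (ENNReal.ofReal_le_ofReal ?_)
  calc _ ≤ 4 * ((p : ℝ)⁻¹) ^ 2 / ((p : ℝ)⁻¹) := by gcongr; exact le_max_right _ _
    _ = _ := by field_simp

lemma q_fib2 (h5 : 5 ≤ p) (a : ℤ_[p]) (ha : ‖a‖ < 1) (x : (ℤ_[p] × ℤ_[p]) × ℤ_[p])
    (hb : ‖x.1.1‖ = 1) (ht : ‖qT p a x‖ = 1) :
    mu p {e | ‖(2 * qA p a x * e + qB p a x) ^ 2 - qT p a x‖ ≤ ((p : ℝ)⁻¹) ^ 2} ≤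
      ENNReal.ofReal (4 * ((p : ℝ)⁻¹) ^ 2) := by
  have hp0 : (0:ℝ) < p := by exact_mod_cast hp.out.pos
  refine (q_fib p h5 a ha x hb).trans (ENNReal.ofReal_le_ofReal ?_)
  rw [ht, Real.sqrt_one]
  exact div_le_self (by positivity) (le_max_left _ _)

lemma q_red (a : ℤ_[p]) (ha : ‖a‖ ≤ (p : ℝ)⁻¹) (x : (ℤ_[p] × ℤ_[p]) × ℤ_[p]) (e : ℤ_[p])
    (h : (x, e) ∈ DS p a 2) :
    ‖(2 * qA p a x * e + qB p a x) ^ 2 - qT p a x‖ ≤ ((p : ℝ)⁻¹) ^ 2 := by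
  have hp0 : (0:ℝ) < p := by exact_mod_cast hp.out.pos
  have h' := (dvd_pow_norm p _ _).1 h
  have eq : (2 * qA p a x * e + qB p a x) ^ 2 - qT p a x =
      4 * qA p a x * BQ.disc ⟨a, x.1.1, x.1.2, x.2, e⟩ -
      4 * qA p a x * (256 * a * e ^ 3 - 192 * x.1.1 * x.2 * e ^ 2 - 128 * x.1.2 ^ 2 * e ^ 2
        + 144 * x.1.2 * x.2 ^ 2 * e - 27 * x.2 ^ 4) * a ^ 2 := by
    simp only [qT, qA, qB, qC, BQ.disc]; ring
  rw [eq]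
  refine (ultra_sub p _ _).trans (max_le ?_ ?_)
  · rw [norm_mul]
    refine (mul_le_of_le_one_left (norm_nonneg _) (PadicInt.norm_le_one _)).trans (h'.trans ?_)
    apply le_of_eq
    rw [zpow_neg, zpow_natCast, inv_pow]
  · rw [norm_mul, norm_pow]
    refine (mul_le_of_le_one_left (by positivity) (PadicInt.norm_le_one _)).trans ?_
    gcongr

lemma lift3 (P : Set (ℤ_[p] × ℤ_[p])) : mu3 p {x | x.1 ∈ P} = mu2 p P := by
  have : {x : (ℤ_[p] × ℤ_[p]) × ℤ_[p] | x.1 ∈ P} = P ×ˢ univ := by ext; simp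
  rw [this, mu3, Measure.prod_prod]; simp

lemma lift4 (P : Set ((ℤ_[p] × ℤ_[p]) × ℤ_[p])) :
    (mu3 p).prod (mu p) {x | x.1 ∈ P} = mu3 p P := by
  have : {x : ((ℤ_[p] × ℤ_[p]) × ℤ_[p]) × ℤ_[p] | x.1 ∈ P} = P ×ˢ univ := by ext; simp
  rw [this, Measure.prod_prod]; simp

lemma lift2 (P : Set ℤ_[p]) : mu2 p {x | x.1 ∈ P} = mu p P := by
  have : {x : ℤ_[p] × ℤ_[p] | x.1 ∈ P} = P ×ˢ univ := by ext; simp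
  rw [this, mu2, Measure.prod_prod]; simp

lemma mu_b0 : mu p {b | ‖b‖ ≤ (p : ℝ)⁻¹} ≤ ENNReal.ofReal ((p : ℝ)⁻¹) := by
  have hp0 : (0:ℝ) < p := by exact_mod_cast hp.out.pos
  simpa using mu_ball p 0 ((p : ℝ)⁻¹) (by positivity)

lemma mu3_b : mu3 p {x | ‖x.1.1‖ ≤ (p : ℝ)⁻¹} ≤ ENNReal.ofReal ((p : ℝ)⁻¹) := by
  have h1 := lift3 p {x | ‖x.1‖ ≤ (p : ℝ)⁻¹}
  have h2 := lift2 p {x | ‖x‖ ≤ (p : ℝ)⁻¹}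
  simp only [mem_ofPred_eq] at h1 h2
  rw [h1, h2]
  exact mu_b0 p

lemma DS_part3 (h5 : 5 ≤ p) (a : ℤ_[p]) (ha : ‖a‖ ≤ (p : ℝ)⁻¹) :
    (mu3 p).prod (mu p) (DS p a 2) ≤ ENNReal.ofReal (5 * (p : ℝ)⁻¹) := by
  have hp0 : (0:ℝ) < p := by exact_mod_cast hp.out.pos
  have hp1 : (1:ℝ) < p := by exact_mod_cast hp.out.one_lt
  have ha1 : ‖a‖ < 1 := ha.trans_lt (inv_lt_one_of_one_lt₀ hp1)
  have hAc := qA_cont p a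
  have hBc := qB_cont p a
  have hTc := qT_cont p a
  let S : Set (((ℤ_[p] × ℤ_[p]) × ℤ_[p]) × ℤ_[p]) := {y | ‖y.1.1.1‖ = 1} ∩
    {y | ‖(2 * qA p a y.1 * y.2 + qB p a y.1) ^ 2 - qT p a y.1‖ ≤ ((p : ℝ)⁻¹) ^ 2}
  have hS : IsClosed S := IsClosed.inter (isClosed_eq (by fun_prop) continuous_const)
    (isClosed_le (by fun_prop) continuous_const)
  have h1 : (mu3 p).prod (mu p) S ≤ ENNReal.ofReal (4 * (p : ℝ)⁻¹) := by
    refine (prod_fiber_le (mu3 p) (mu p) S hS.measurableSet univ MeasurableSet.univ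
      (ENNReal.ofReal (4 * (p : ℝ)⁻¹)) ?_ (fun _ _ _ => mem_univ _)).trans (by simp)
    intro x _
    by_cases hb : ‖x.1.1‖ = 1
    · refine (measure_mono ?_).trans (q_fib1 p h5 a ha1 x hb)
      intro e he; exact he.2
    · have : Prod.mk x ⁻¹' S = ∅ := by
        ext y; simp only [mem_preimage, mem_empty_iff_false, iff_false]; exact fun h => hb h.1
      simp [this]
  have h2 := lift4 p {x | ‖x.1.1‖ ≤ (p : ℝ)⁻¹}
  have hsub : DS p a 2 ⊆ {y | y.1 ∈ {x : (ℤ_[p] × ℤ_[p]) × ℤ_[p] | ‖x.1.1‖ ≤ (p : ℝ)⁻¹}} ∪ S := by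
    rintro ⟨x, e⟩ h
    rcases norm_dich p x.1.1 with hb | hb
    · exact Or.inr ⟨hb, q_red p a ha x e h⟩
    · exact Or.inl hb
  refine (measure_mono hsub).trans ((measure_union_le _ _).trans ?_)
  rw [h2]
  refine (add_le_add (mu3_b p) h1).trans ?_
  rw [← ENNReal.ofReal_add (by positivity) (by positivity)]
  apply ENNReal.ofReal_le_ofReal
  apply le_of_eq; ring

lemma DS_part2 (h5 : 5 ≤ p) (u : ℤ_[p]) (hu : ‖u‖ = 1) :
    (mu3 p).prod (mu p) (DS p (u * p) 2) ≤ ENNReal.ofReal (10 * ((p : ℝ)⁻¹) ^ 2) := by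
  have hp0 : (0:ℝ) < p := by exact_mod_cast hp.out.pos
  have hp1 : (1:ℝ) < p := by exact_mod_cast hp.out.one_lt
  have hε1 : (p : ℝ)⁻¹ < 1 := inv_lt_one_of_one_lt₀ hp1
  have hε0 : 0 < (p : ℝ)⁻¹ := by positivity
  obtain ⟨a, haa⟩ : ∃ a, a = u * (p : ℤ_[p]) := ⟨_, rfl⟩
  have han : ‖a‖ = (p : ℝ)⁻¹ := by rw [haa, norm_mul, hu, PadicInt.norm_p, one_mul]
  have ha : ‖a‖ ≤ (p : ℝ)⁻¹ := han.le
  have ha1 : ‖a‖ < 1 := by rw [han]; exact hε1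
  rw [← haa]
  have hAc := qA_cont p a
  have hBc := qB_cont p a
  have hTc := qT_cont p a
  have h4 : ‖(4 : ℤ_[p])‖ = 1 := by
    have := norm_smooth p h5 2 0; norm_num at this; exact this
  have h16 : ‖(16 : ℤ_[p])‖ = 1 := by
    have := norm_smooth p h5 4 0; norm_num at this; exact this
  have h3 : ‖(3 : ℤ_[p])‖ = 1 := by
    have := norm_smooth p h5 0 1; norm_num at this; exact this
  let Q : Set (((ℤ_[p] × ℤ_[p]) × ℤ_[p]) × ℤ_[p]) :=
    {y | ‖(2 * qA p a y.1 * y.2 + qB p a y.1) ^ 2 - qT p a y.1‖ ≤ ((p : ℝ)⁻¹) ^ 2}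
  have hQ : IsClosed Q := isClosed_le (by fun_prop) continuous_const
  let P1 : Set (ℤ_[p] × ℤ_[p]) := {x | ‖x.1‖ ≤ (p : ℝ)⁻¹} ∩ {x | ‖x.2‖ ≤ (p : ℝ)⁻¹}
  let S1 : Set (((ℤ_[p] × ℤ_[p]) × ℤ_[p]) × ℤ_[p]) := {y | y.1 ∈ {x : (ℤ_[p] × ℤ_[p]) × ℤ_[p] | x.1 ∈ P1}}
  have m1 : (mu3 p).prod (mu p) S1 ≤ ENNReal.ofReal (((p : ℝ)⁻¹) ^ 2) := by
    rw [lift4, lift3]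
    have : P1 = {x | ‖x‖ ≤ (p : ℝ)⁻¹} ×ˢ {x | ‖x‖ ≤ (p : ℝ)⁻¹} := by ext; simp [P1]
    rw [this, mu2, Measure.prod_prod, pow_two, ENNReal.ofReal_mul (by positivity)]
    exact mul_le_mul' (mu_b0 p) (mu_b0 p)
  let S2 : Set (((ℤ_[p] × ℤ_[p]) × ℤ_[p]) × ℤ_[p]) := {y | ‖y.1.1.1‖ ≤ (p : ℝ)⁻¹} ∩
    ({y | ‖y.1.1.2‖ = 1} ∩ {y | ‖4 * y.1.1.2 * y.2 + 0 - y.1.2 ^ 2‖ ≤ (p : ℝ)⁻¹})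
  have hS2 : IsClosed S2 := IsClosed.inter (isClosed_le (by fun_prop) continuous_const)
    (IsClosed.inter (isClosed_eq (by fun_prop) continuous_const)
    (isClosed_le (by fun_prop) continuous_const))
  have m2 : (mu3 p).prod (mu p) S2 ≤ ENNReal.ofReal (((p : ℝ)⁻¹) ^ 2) := by
    have hP : IsClosed {x : (ℤ_[p] × ℤ_[p]) × ℤ_[p] | ‖x.1.1‖ ≤ (p : ℝ)⁻¹} :=
      isClosed_le (by fun_prop) continuous_const
    refine (prod_fiber_le (mu3 p) (mu p) S2 hS2.measurableSet _ hP.measurableSet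
      (ENNReal.ofReal ((p : ℝ)⁻¹)) ?_ (fun _ _ h => h.1)).trans ?_
    · intro x _
      by_cases hc : ‖x.1.2‖ = 1
      · have hn : ‖4 * x.1.2‖ = 1 := by rw [norm_mul, h4, hc, one_mul]
        have := mu_ball_lin p (4 * x.1.2) 0 (x.2 ^ 2) (by rw [← norm_pos_iff, hn]; norm_num)
          ((p : ℝ)⁻¹) hε0
        rw [hn, inv_one, one_mul] at this
        refine (measure_mono ?_).trans this
        intro e he; exact he.2.2
      · have : Prod.mk x ⁻¹' S2 = ∅ := by
          ext y; simp only [mem_preimage, mem_empty_iff_false, iff_false]; exact fun h => hc h.2.1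
        simp [this]
    · rw [pow_two, ENNReal.ofReal_mul (by positivity)]
      exact mul_le_mul_right (mu3_b p) _
  let S3 : Set (((ℤ_[p] × ℤ_[p]) × ℤ_[p]) × ℤ_[p]) := {y | ‖y.1.1.1‖ = 1} ∩
    ({y | ‖qT p a y.1‖ = 1} ∩ Q)
  have hS3 : IsClosed S3 := IsClosed.inter (isClosed_eq (by fun_prop) continuous_const)
    (IsClosed.inter (isClosed_eq (by fun_prop) continuous_const) hQ)
  have m3 : (mu3 p).prod (mu p) S3 ≤ ENNReal.ofReal (4 * ((p : ℝ)⁻¹) ^ 2) := by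
    refine (prod_fiber_le (mu3 p) (mu p) S3 hS3.measurableSet univ MeasurableSet.univ
      (ENNReal.ofReal (4 * ((p : ℝ)⁻¹) ^ 2)) ?_ (fun _ _ _ => mem_univ _)).trans (by simp)
    intro x _
    by_cases hb : ‖x.1.1‖ = 1 ∧ ‖qT p a x‖ = 1
    · refine (measure_mono ?_).trans (q_fib2 p h5 a ha1 x hb.1 hb.2)
      intro e he; exact he.2.2
    · have : Prod.mk x ⁻¹' S3 = ∅ := by
        ext y; simp only [mem_preimage, mem_empty_iff_false, iff_false]
        exact fun h => hb ⟨h.1, h.2.1⟩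
      simp [this]
  let P4 : Set ((ℤ_[p] × ℤ_[p]) × ℤ_[p]) := {x | ‖x.1.1‖ = 1} ∩
    {x | ‖3 * x.1.1 * x.2 + 0 - x.1.2 ^ 2‖ ≤ (p : ℝ)⁻¹}
  have hP4 : IsClosed P4 := IsClosed.inter (isClosed_eq (by fun_prop) continuous_const)
    (isClosed_le (by fun_prop) continuous_const)
  have hmP4 : mu3 p P4 ≤ ENNReal.ofReal ((p : ℝ)⁻¹) := by
    refine (prod_fiber_le (mu2 p) (mu p) P4 hP4.measurableSet univ MeasurableSet.univ
      (ENNReal.ofReal ((p : ℝ)⁻¹)) ?_ (fun _ _ _ => mem_univ _)).trans (by simp)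
    intro x _
    by_cases hb : ‖x.1‖ = 1
    · have hn : ‖3 * x.1‖ = 1 := by rw [norm_mul, h3, hb, one_mul]
      have := mu_ball_lin p (3 * x.1) 0 (x.2 ^ 2) (by rw [← norm_pos_iff, hn]; norm_num)
        ((p : ℝ)⁻¹) hε0
      rw [hn, inv_one, one_mul] at this
      refine (measure_mono ?_).trans this
      intro e he; exact he.2
    · have : Prod.mk x ⁻¹' P4 = ∅ := by
        ext y; simp only [mem_preimage, mem_empty_iff_false, iff_false]; exact fun h => hb h.1
      simp [this]
  let S4 : Set (((ℤ_[p] × ℤ_[p]) × ℤ_[p]) × ℤ_[p]) := {y | y.1 ∈ P4} ∩ Q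
  have hS4 : IsClosed S4 := IsClosed.inter (hP4.preimage continuous_fst) hQ
  have m4 : (mu3 p).prod (mu p) S4 ≤ ENNReal.ofReal (4 * ((p : ℝ)⁻¹) ^ 2) := by
    refine (prod_fiber_le (mu3 p) (mu p) S4 hS4.measurableSet P4 hP4.measurableSet
      (ENNReal.ofReal (4 * (p : ℝ)⁻¹)) ?_ (fun _ _ h => h.1)).trans ?_
    · intro x hx
      refine (measure_mono ?_).trans (q_fib1 p h5 a ha1 x hx.1)
      intro e he; exact he.2
    · refine (mul_le_mul_right hmP4 _).trans ?_
      rw [← ENNReal.ofReal_mul (by positivity)]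
      apply ENNReal.ofReal_le_ofReal
      apply le_of_eq; ring
  have hsub : DS p a 2 ⊆ (S1 ∪ S2) ∪ (S3 ∪ S4) := by
    rintro ⟨⟨⟨b, c⟩, d⟩, e⟩ h
    rcases norm_dich p b with hb | hb
    · right
      have hq := q_red p a ha _ e h
      rcases norm_dich p (qT p a ((b, c), d)) with ht | ht
      · exact Or.inl ⟨hb, ht, hq⟩
      · refine Or.inr ⟨⟨hb, ?_⟩, hq⟩
        have e1 : 16 * b ^ 4 * (3 * b * d + 0 - c ^ 2) ^ 3 =
            a * (2 * (18 * b ^ 3 * c * d - 4 * b ^ 2 * c ^ 3) *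
              (-6 * b ^ 2 * d ^ 2 - 80 * b * c ^ 2 * d + 16 * c ^ 4)
              + a * (-6 * b ^ 2 * d ^ 2 - 80 * b * c ^ 2 * d + 16 * c ^ 4) ^ 2
              + 4 * (27 * b ^ 4) * (18 * b * c * d ^ 3 - 4 * c ^ 3 * d ^ 2)
              - 4 * (144 * b ^ 2 * c) * (b ^ 2 * c ^ 2 * d ^ 2 - 4 * b ^ 3 * d ^ 3)
              - 4 * a * (144 * b ^ 2 * c) * (18 * b * c * d ^ 3 - 4 * c ^ 3 * d ^ 2))
            - qT p a ((b, c), d) := by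
          simp only [qT, qA, qB, qC]; ring
        have e2 : ‖3 * b * d + 0 - c ^ 2‖ ^ 3 = ‖16 * b ^ 4 * (3 * b * d + 0 - c ^ 2) ^ 3‖ := by
          have hb' : ‖b‖ = 1 := hb
          rw [norm_mul, norm_mul, norm_pow, norm_pow, h16, hb']; norm_num
        have e3 : ‖3 * b * d + 0 - c ^ 2‖ ^ 3 ≤ (p : ℝ)⁻¹ := by
          rw [e2, e1]
          refine (ultra_sub p _ _).trans (max_le ?_ ht)
          rw [norm_mul]
          exact (mul_le_of_le_one_right (norm_nonneg _) (PadicInt.norm_le_one _)).trans ha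
        rcases norm_dich p (3 * b * d + 0 - c ^ 2) with h6 | h6
        · rw [h6] at e3; norm_num at e3; linarith
        · exact h6
    · left
      rcases norm_dich p c with hc | hc
      · refine Or.inr ⟨hb, hc, ?_⟩
        have h' := (dvd_pow_norm p _ _).1 h
        have hb' : ‖b‖ ≤ (p : ℝ)⁻¹ := hb
        have hc' : ‖c‖ = 1 := hc
        have e1 : 4 * c ^ 3 * (4 * c * e + 0 - d ^ 2) * a = BQ.disc ⟨a, b, c, d, e⟩ -
            (a * a * (256 * a * e ^ 3 - 192 * b * d * e ^ 2 - 128 * c ^ 2 * e ^ 2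
              + 144 * c * d ^ 2 * e - 27 * d ^ 4)
             + (a * b * (144 * b * c * e ^ 2 - 6 * b * d ^ 2 * e - 80 * c ^ 2 * d * e
              + 18 * c * d ^ 3)
             + b * b * (-27 * b ^ 2 * e ^ 2 + 18 * b * c * d * e - 4 * b * d ^ 3
              - 4 * c ^ 3 * e + c ^ 2 * d ^ 2))) := by
          simp only [BQ.disc]; ring
        have hsm : ∀ x y z : ℤ_[p], ‖x‖ ≤ (p : ℝ)⁻¹ → ‖y‖ ≤ (p : ℝ)⁻¹ →
            ‖x * y * z‖ ≤ (p : ℝ)⁻¹ * (p : ℝ)⁻¹ := by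
          intro x y z hx hy
          rw [norm_mul, norm_mul]
          refine (mul_le_of_le_one_right (by positivity) (PadicInt.norm_le_one _)).trans ?_
          gcongr
        have e2 : ‖4 * c * e + 0 - d ^ 2‖ * (p : ℝ)⁻¹ =
            ‖4 * c ^ 3 * (4 * c * e + 0 - d ^ 2) * a‖ := by
          rw [norm_mul _ a, norm_mul, norm_mul, norm_pow, h4, hc', han]; norm_num
        have e3 : ‖4 * c * e + 0 - d ^ 2‖ * (p : ℝ)⁻¹ ≤ (p : ℝ)⁻¹ * (p : ℝ)⁻¹ := by
          rw [e2, e1]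
          refine (ultra_sub p _ _).trans (max_le ?_ ?_)
          · refine h'.trans (le_of_eq ?_)
            rw [zpow_neg, zpow_natCast]; field_simp
          · refine (PadicInt.nonarchimedean _ _).trans (max_le (hsm _ _ _ ha ha) ?_)
            exact (PadicInt.nonarchimedean _ _).trans
              (max_le (hsm _ _ _ ha hb') (hsm _ _ _ hb' hb'))
        exact le_of_mul_le_mul_right e3 hε0
      · exact Or.inl ⟨hb, hc⟩
  refine (measure_mono hsub).trans ((measure_union_le _ _).trans ((add_le_add
    ((measure_union_le _ _).trans (add_le_add m1 m2))
    ((measure_union_le _ _).trans (add_le_add m3 m4))).trans ?_))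
  rw [← ENNReal.ofReal_add (by positivity) (by positivity),
    ← ENNReal.ofReal_add (by positivity) (by positivity),
    ← ENNReal.ofReal_add (by positivity) (by positivity)]
  apply ENNReal.ofReal_le_ofReal
  apply le_of_eq; ring

end JJ

section KK
variable (p : ℕ) [hp : Fact p.Prime]

def phi (v : Fin 4 → ℤ_[p]) : ((ℤ_[p] × ℤ_[p]) × ℤ_[p]) × ℤ_[p] := (((v 0, v 1), v 2), v 3)

lemma phi_cont : Continuous (phi p) := by unfold phi; fun_prop

lemma transfer (ν : Measure (Fin 4 → ℤ_[p])) (h1 : IsProbabilityMeasure ν)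
    (h2 : ∀ t : Fin 4 → ℤ_[p], ν.map (fun x => t + x) = ν) :
    ν.map (phi p) = (mu3 p).prod (mu p) := by
  have hm : Measurable (phi p) := (phi_cont p).measurable
  have : IsProbabilityMeasure (ν.map (phi p)) := Measure.isProbabilityMeasure_map hm.aemeasurable
  have hinv : (ν.map (phi p)).IsAddLeftInvariant := ⟨by
    rintro ⟨⟨⟨b, c⟩, d⟩, e⟩
    have ht := h2 ![b, c, d, e]
    conv_rhs => rw [← ht]
    rw [Measure.map_map (by fun_prop) hm, Measure.map_map hm (by fun_prop)]
    rfl⟩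
  have hh : ((mu3 p).prod (mu p)).IsAddHaarMeasure := by
    have h22 : (mu2 p).IsAddHaarMeasure := by unfold mu2; infer_instance
    have h33 : (mu3 p).IsAddHaarMeasure := by unfold mu3; infer_instance
    infer_instance
  have := Measure.isAddLeftInvariant_eq_smul (ν.map (phi p)) ((mu3 p).prod (mu p))
  have h3 : Measure.addHaarScalarFactor (ν.map (phi p)) ((mu3 p).prod (mu p)) = 1 := by
    have h := congrArg (fun m => m univ) this
    simp only [measure_univ, Measure.smul_apply] at h
    rw [ENNReal.smul_def, smul_eq_mul, mul_one] at h
    exact_mod_cast h.symm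
  rw [this, h3, one_smul]

lemma nu_eq (ν : Measure (Fin 4 → ℤ_[p])) (h1 : IsProbabilityMeasure ν)
    (h2 : ∀ t : Fin 4 → ℤ_[p], ν.map (fun x => t + x) = ν) (a : ℤ_[p]) (j : ℕ) :
    ν {v | (p : ℤ_[p]) ^ j ∣ (ofVecA a v).disc} = (mu3 p).prod (mu p) (DS p a j) := by
  rw [← transfer p ν h1 h2, Measure.map_apply (phi_cont p).measurable (DS_closed p a j).measurableSet]
  rfl

end KK

lemma main_aux (p : ℕ) [hp : Fact p.Prime] (ν : Measure (Fin 4 → ℤ_[p]))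
    (h1 : IsProbabilityMeasure ν)
    (h2 : ∀ t : Fin 4 → ℤ_[p], ν.map (fun x => t + x) = ν) (k : ℕ) (hk : 1 ≤ k) (u : ℤ_[p])
    (hu : IsUnit u) (l : ℕ) (hl : l ≤ 2 * k) :
    (ν {v | (p : ℤ_[p]) ^ 2 ∣ (ofVecA u v).disc} ≤ ENNReal.ofReal (590478336 * (p : ℝ) ^ (-2 : ℝ))) ∧
    (ν {v | (p : ℤ_[p]) ^ 2 ∣ (ofVecA (u * p) v).disc}
      ≤ ENNReal.ofReal (590478336 * (p : ℝ) ^ (-2 : ℝ))) ∧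
    (ν {v | (p : ℤ_[p]) ^ 2 ∣ (ofVecA (u * p ^ 2) v).disc}
      ≤ ENNReal.ofReal (590478336 * (p : ℝ) ^ (-1 : ℝ))) ∧
    (ν {v | (p : ℤ_[p]) ^ 4 ∣ (ofVecA (u * p ^ l) v).disc}
      ≤ ENNReal.ofReal (590478336 * (p : ℝ) ^ (-(4 - (l : ℝ))))) ∧
    (3 ≤ k → ν {v | (p : ℤ_[p]) ^ (2 * k) ∣ (ofVecA (u * p ^ l) v).disc}
      ≤ ENNReal.ofReal (590478336 * min ((k : ℝ) * (p : ℝ) ^ ((l : ℝ) - 3 * (k : ℝ) / 2)) 1)) := by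
  have hp0 : (0:ℝ) < p := by exact_mod_cast hp.out.pos
  have hp1 : (1:ℝ) < p := by exact_mod_cast hp.out.one_lt
  have hpz : (p : ℤ_[p]) ≠ 0 := by exact_mod_cast hp.out.ne_zero
  have hun : ‖u‖ = 1 := PadicInt.isUnit_iff.1 hu
  have hu0 : u ≠ 0 := hu.ne_zero
  have htriv : ∀ (S : Set (Fin 4 → ℤ_[p])) (x : ℝ), 1 ≤ x → ν S ≤ ENNReal.ofReal x := by
    intro S x hx
    refine prob_le_one.trans ?_
    rw [← ENNReal.ofReal_one]; exact ENNReal.ofReal_le_ofReal hx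
  have hsmall : ∀ n : ℕ, n ≤ 4 → p < 5 → (1:ℝ) ≤ 590478336 * ((p : ℝ)⁻¹) ^ n := by
    intro n hn h
    have hp5 : (p:ℝ) ≤ 5 := by exact_mod_cast h.le
    have h3 : ((5:ℝ)⁻¹) ^ 4 ≤ ((p : ℝ)⁻¹) ^ n := by
      calc ((5:ℝ)⁻¹) ^ 4 ≤ ((5:ℝ)⁻¹) ^ n := pow_le_pow_of_le_one (by norm_num) (by norm_num) hn
        _ ≤ _ := by gcongr
    norm_num at h3 ⊢
    linarith
  have hr : ∀ n : ℕ, (p : ℝ) ^ (-(n : ℝ)) = ((p : ℝ)⁻¹) ^ n := by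
    intro n; rw [Real.rpow_neg hp0.le, Real.rpow_natCast, inv_pow]
  have hz : ∀ n : ℕ, (p : ℝ) ^ (-(n : ℕ) : ℤ) = ((p : ℝ)⁻¹) ^ n := by
    intro n; rw [zpow_neg, zpow_natCast, inv_pow]
  have hupl : ∀ n : ℕ, ‖u * (p : ℤ_[p]) ^ n‖ = ((p : ℝ)⁻¹) ^ n := by
    intro n; rw [norm_mul, hun, one_mul, norm_pow, PadicInt.norm_p]
  have hr2 := hr 2
  have hr1 := hr 1
  norm_num only [Nat.cast_ofNat, Nat.cast_one] at hr2 hr1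
  have hi0 : 0 < (p : ℝ)⁻¹ := by positivity
  have hi1 : (p : ℝ)⁻¹ ≤ 1 := inv_le_one_of_one_le₀ hp1.le
  refine ⟨?_, ?_, ?_, ?_, ?_⟩
  · rw [hr2]
    by_cases h5 : 5 ≤ p
    · rw [nu_eq p ν h1 h2]
      have := DS_small p h5 u hu0 1 le_rfl (by norm_num) (by
        rw [hz, hun]; exact pow_le_one₀ hi0.le hi1)
      rwa [hz, hun, inv_one, one_mul, mul_one] at this
    · exact htriv _ _ (hsmall 2 (by norm_num) (by omega))
  · rw [hr2]
    by_cases h5 : 5 ≤ p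
    · rw [nu_eq p ν h1 h2]
      refine (DS_part2 p h5 u hun).trans (ENNReal.ofReal_le_ofReal ?_)
      gcongr; norm_num
    · exact htriv _ _ (hsmall 2 (by norm_num) (by omega))
  · rw [hr1, pow_one]
    by_cases h5 : 5 ≤ p
    · rw [nu_eq p ν h1 h2]
      refine (DS_part3 p h5 _ ?_).trans (ENNReal.ofReal_le_ofReal ?_)
      · rw [hupl]; nlinarith
      · gcongr; norm_num
    · have := hsmall 1 (by norm_num) (by omega)
      rw [pow_one] at this
      exact htriv _ _ this
  · rcases le_or_gt 4 l with h4 | h4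
    · apply htriv
      have : (1:ℝ) ≤ (p : ℝ) ^ (-(4 - (l : ℝ))) := by
        apply Real.one_le_rpow hp1.le
        have : (4:ℝ) ≤ l := by exact_mod_cast h4
        linarith
      linarith
    · have e : (p : ℝ) ^ (-(4 - (l : ℝ))) = ((p : ℝ)⁻¹) ^ (4 - l) := by
        rw [← hr, Nat.cast_sub h4.le]; norm_num
      rw [e]
      by_cases h5 : 5 ≤ p
      · rw [nu_eq p ν h1 h2]
        have := DS_small p h5 (u * (p : ℤ_[p]) ^ l) (mul_ne_zero hu0 (pow_ne_zero _ hpz)) 2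
          (by norm_num) le_rfl (by
          rw [hz, hupl]; exact pow_le_pow_of_le_one hi0.le hi1 (by omega))
        refine this.trans (ENNReal.ofReal_le_ofReal ?_)
        rw [hz, hupl]
        apply le_of_eq
        congr 1
        rw [inv_mul_eq_iff_eq_mul₀ (by positivity), ← pow_add]
        congr 1; omega
      · exact htriv _ _ (hsmall (4 - l) (by omega) (by omega))
  · intro hk3
    rcases le_total ((k : ℝ) * (p : ℝ) ^ ((l : ℝ) - 3 * (k : ℝ) / 2)) 1 with h | h
    · rw [min_eq_left h, nu_eq p ν h1 h2]
      have := DS_big p (u * (p : ℤ_[p]) ^ l) (mul_ne_zero hu0 (pow_ne_zero _ hpz)) k hk (by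
          rw [hz, hupl]; exact pow_le_pow_of_le_one hi0.le hi1 hl)
      refine this.trans (ENNReal.ofReal_le_ofReal ?_)
      rw [hupl, ← inv_pow, inv_inv, ← Real.rpow_natCast, ← Real.rpow_add hp0, ← sub_eq_add_neg]
      gcongr; norm_num
    · rw [min_eq_right h]
      apply htriv; norm_num


end helpers

/-- Bounds, uniform in the prime `p`, on the density
`ν_{up^ℓ}(χ_{p^{2k}})` of forms in `V_{up^ℓ}(ℤ_p)` whose discriminant is divisible by
`p^{2k}`; here `ν` is the Haar probability measure on `V_a(ℤ_p) ≅ ℤ_p⁴` (here: any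
translation-invariant Borel probability measure), `u` is a unit and `0 ≤ ℓ ≤ 2k`. -/
theorem disc_divisibility_density_sliced :
    ∃ C : ℝ, 0 < C ∧
      ∀ (p : Nat.Primes) (ν : Measure (Fin 4 → ℤ_[(p : ℕ)])),
        IsProbabilityMeasure ν →
        (∀ t : Fin 4 → ℤ_[(p : ℕ)], ν.map (fun x => t + x) = ν) →
        ∀ (k : ℕ), 1 ≤ k → ∀ (u : ℤ_[(p : ℕ)]), IsUnit u → ∀ (l : ℕ), l ≤ 2 * k →
        (ν (discDivSetA p u 2) ≤ ENNReal.ofReal (C * ((p : ℕ) : ℝ) ^ (-2 : ℝ))) ∧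
        (ν (discDivSetA p (u * (p : ℕ)) 2)
          ≤ ENNReal.ofReal (C * ((p : ℕ) : ℝ) ^ (-2 : ℝ))) ∧
        (ν (discDivSetA p (u * ((p : ℕ)) ^ 2) 2)
          ≤ ENNReal.ofReal (C * ((p : ℕ) : ℝ) ^ (-1 : ℝ))) ∧
        (ν (discDivSetA p (u * ((p : ℕ)) ^ l) 4)
          ≤ ENNReal.ofReal (C * ((p : ℕ) : ℝ) ^ (-(4 - (l : ℝ))))) ∧
        (3 ≤ k → ν (discDivSetA p (u * ((p : ℕ)) ^ l) (2 * k))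
          ≤ ENNReal.ofReal
              (C * min ((k : ℝ) * ((p : ℕ) : ℝ) ^ ((l : ℝ) - 3 * (k : ℝ) / 2)) 1)) := by
  refine ⟨590478336, by norm_num, ?_⟩
  intro p ν h1 h2 k hk u hu l hl
  exact main_aux (p : ℕ) ν h1 h2 k hk u hu l hl

end BQPaper
end
end

section
/- There is an absolute constant C with the following property. Let p be a prime, k ≥ 1 an integer, and f ∈ V(ℤ/p^kℤ) with f ∉ pV(ℤ/p^kℤ). Then for every h ∈ V(ℤ/p^kℤ): |G_{p^k}(f,h)| ≤ C; |G_{p^k}(f,h)| ≤ C p^{−1/2} if h ∈ p^{k−1}V(ℤ/p^kℤ) and h ≠ 0; and |G_{p^k}(f,h)| ≤ C p^{−1} if h ∉ p^{k−1}V(ℤ/p^kℤ). -/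
noncomputable section

namespace BQPaper

open scoped Real

/-- The additive character `m ↦ exp(2πi·m/n)` on `ℤ/nℤ` (evaluated at the canonical
lift of `m`; the value does not depend on the choice of lift). -/
def eChar (n : ℕ) (m : ZMod n) : ℂ :=
  Complex.exp (2 * (π : ℂ) * Complex.I * (m.val : ℂ) / (n : ℂ))

/-- The pairing `[f,h] = Σᵢ fᵢhᵢ` on binary quartic forms over `ℤ/nℤ`. -/
def pairing {R : Type*} [CommRing R] (f h : BQ R) : R :=
  f.a * h.a + f.b * h.b + f.c * h.c + f.d * h.d + f.e * h.e

/-- View a vector of coefficients as a binary quartic form. -/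
def ofVec {R : Type*} (v : Fin 5 → R) : BQ R := ⟨v 0, v 1, v 2, v 3, v 4⟩

/-- View a vector of entries as a 2×2 matrix. -/
def matOfVec {R : Type*} (v : Fin 4 → R) : Mat2 R := ⟨v 0, v 1, v 2, v 3⟩

/-- The number of elements of `GL₂(ℤ/nℤ)`. -/
def numGL (n : ℕ) : ℕ := Nat.card {m : Mat2 (ZMod n) // IsUnit m.det}

open scoped Classical in
/-- The orbital exponential sum
`G_{p^k}(f,h) = (1/(#(ℤ/p^kℤ)^× · #PGL₂(ℤ/p^kℤ))) Σ_{t units} Σ_{g ∈ PGL₂} e(t²[g·f,h]/p^k)`.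
Since the twisted action of `GL₂` factors through `PGL₂` and the fibres of
`GL₂ → PGL₂` have `#(ℤ/p^kℤ)^×` elements, this equals the normalised sum below over
`GL₂(ℤ/p^kℤ)`. -/
noncomputable def orbSum (n : ℕ) (f h : BQ (ZMod n)) : ℂ :=
  ((Nat.card (ZMod n)ˣ : ℂ) * (numGL n : ℂ))⁻¹ *
    ∑' t : (ZMod n)ˣ, ∑' v : Fin 4 → ZMod n,
      if IsUnit (matOfVec v).det then
        eChar n (((t : ZMod n) ^ 2) * pairing (f.twist (matOfVec v)) h)
      else 0

open Finset

lemma eChar_eq (n : ℕ) [NeZero n] (m : ZMod n) : eChar n m = ZMod.stdAddChar m := by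
  rw [ZMod.stdAddChar_apply, ZMod.toCircle_apply, eChar]

lemma norm_std {n : ℕ} [NeZero n] (m : ZMod n) : ‖(ZMod.stdAddChar m : ℂ)‖ = 1 := by
  exact AddChar.norm_apply _ _

/-- The pairing is a nonzero polynomial function. -/
lemma pairing_nonzero {K : Type*} [Field K] (h2 : (2 : K) ≠ 0) (h3 : (3 : K) ≠ 0) (f h : BQ K)
    (H : ∀ p q r s : K, pairing (f.subst ⟨p, q, r, s⟩) h = 0) :
    f = ⟨0, 0, 0, 0, 0⟩ ∨ h = ⟨0, 0, 0, 0, 0⟩ := by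
  have h24 : (24 : K) ≠ 0 := by
    have : (24 : K) = 2 * 2 * 2 * 3 := by norm_num
    rw [this]; simp [h2, h3]
  have sep : ∀ p q r s : K, (f.subst ⟨p, q, r, s⟩).a * h.a = 0 ∧
      (f.subst ⟨p, q, r, s⟩).b * h.b = 0 ∧ (f.subst ⟨p, q, r, s⟩).c * h.c = 0 ∧
      (f.subst ⟨p, q, r, s⟩).d * h.d = 0 ∧ (f.subst ⟨p, q, r, s⟩).e * h.e = 0 := by
    intro p q r s
    have key : ∀ l : K, (f.subst ⟨p, q, r, s⟩).a * h.a + l * ((f.subst ⟨p, q, r, s⟩).b * h.b)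
        + l ^ 2 * ((f.subst ⟨p, q, r, s⟩).c * h.c) + l ^ 3 * ((f.subst ⟨p, q, r, s⟩).d * h.d)
        + l ^ 4 * ((f.subst ⟨p, q, r, s⟩).e * h.e) = 0 := by
      intro l
      have := H p q (l * r) (l * s)
      simp only [pairing, BQ.subst] at this ⊢
      linear_combination this
    generalize (f.subst ⟨p, q, r, s⟩).a * h.a = A at *
    generalize (f.subst ⟨p, q, r, s⟩).b * h.b = B at *
    generalize (f.subst ⟨p, q, r, s⟩).c * h.c = C at *
    generalize (f.subst ⟨p, q, r, s⟩).d * h.d = D at *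
    generalize (f.subst ⟨p, q, r, s⟩).e * h.e = E at *
    have k0 := key 0
    have k1 := key 1
    have k2 := key (-1)
    have k3 := key 2
    have k4 := key (-2)
    have hA : A = 0 := by linear_combination k0
    subst hA
    refine ⟨rfl, ?_, ?_, ?_, ?_⟩ <;> apply (mul_eq_zero.mp (?_ : (24 : K) * _ = 0)).resolve_left h24
    · linear_combination 16 * (k1 - k2) - 2 * (k3 - k4)
    · linear_combination 16 * (k1 + k2) - (k3 + k4)
    · linear_combination -4 * (k1 - k2) + 2 * (k3 - k4)
    · linear_combination -4 * (k1 + k2) + (k3 + k4)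
  by_contra hcon
  push Not at hcon
  obtain ⟨hf, hh⟩ := hcon
  have h12 : (12 : K) ≠ 0 := by
    have : (12 : K) = 2 * 2 * 3 := by norm_num
    rw [this]; simp [h2, h3]
  obtain ⟨a, b, c, d, e⟩ := f
  obtain ⟨a', b', c', d', e'⟩ := h
  simp only [BQ.subst] at sep
  apply hh
  have hX : ∀ x : K, (x * a = 0 ∧ x * b = 0 ∧ x * c = 0 ∧ x * d = 0 ∧ x * e = 0) → x = 0 := by
    intro x hx
    by_contra h0
    apply hf
    simpa [h0] using hx
  have ha : a' = 0 := by
    apply hX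
    have ya := (sep 1 0 0 0).1
    have ye := (sep 0 1 0 0).1
    have y1 := (sep 1 1 0 0).1
    have y2 := (sep 1 (-1) 0 0).1
    have y3 := (sep 1 2 0 0).1
    refine ⟨?_, ?_, ?_, ?_, ?_⟩ <;> apply (mul_eq_zero.mp (?_ : (12 : K) * _ = 0)).resolve_left h12
    · linear_combination 12 * ya
    · linear_combination 6 * (y1 - y2) - 2 * (y3 - ya - 16 * ye - 2 * (y1 + y2 - 2 * ya - 2 * ye) - (y1 - y2))
    · linear_combination 6 * (y1 + y2 - 2 * ya - 2 * ye)
    · linear_combination 2 * (y3 - ya - 16 * ye - 2 * (y1 + y2 - 2 * ya - 2 * ye) - (y1 - y2))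
    · linear_combination 12 * ye
  have he : e' = 0 := by
    apply hX
    have ya := (sep 0 0 1 0).2.2.2.2
    have ye := (sep 0 0 0 1).2.2.2.2
    have y1 := (sep 0 0 1 1).2.2.2.2
    have y2 := (sep 0 0 1 (-1)).2.2.2.2
    have y3 := (sep 0 0 1 2).2.2.2.2
    refine ⟨?_, ?_, ?_, ?_, ?_⟩ <;> apply (mul_eq_zero.mp (?_ : (12 : K) * _ = 0)).resolve_left h12
    · linear_combination 12 * ya
    · linear_combination 6 * (y1 - y2) - 2 * (y3 - ya - 16 * ye - 2 * (y1 + y2 - 2 * ya - 2 * ye) - (y1 - y2))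
    · linear_combination 6 * (y1 + y2 - 2 * ya - 2 * ye)
    · linear_combination 2 * (y3 - ya - 16 * ye - 2 * (y1 + y2 - 2 * ya - 2 * ye) - (y1 - y2))
    · linear_combination 12 * ye
  have hb : b' = 0 := by
    apply hX
    have ya := (sep 1 0 1 0).2.1
    have yb := (sep 1 0 0 1).2.1
    have yd := (sep 0 1 1 0).2.1
    have ye := (sep 0 1 0 1).2.1
    have y := (sep 1 1 0 1).2.1
    refine ⟨?_, ?_, ?_, ?_, ?_⟩ <;> apply (mul_eq_zero.mp (?_ : (12 : K) * _ = 0)).resolve_left h12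
    · linear_combination 3 * ya
    · linear_combination 12 * yb
    · linear_combination 6 * (y - yb - 3 * yd - ye)
    · linear_combination 12 * yd
    · linear_combination 3 * ye
  have hd : d' = 0 := by
    apply hX
    have ya := (sep 1 0 1 0).2.2.2.1
    have yd := (sep 1 0 0 1).2.2.2.1
    have yb := (sep 0 1 1 0).2.2.2.1
    have ye := (sep 0 1 0 1).2.2.2.1
    have y := (sep 1 0 1 1).2.2.2.1
    refine ⟨?_, ?_, ?_, ?_, ?_⟩ <;> apply (mul_eq_zero.mp (?_ : (12 : K) * _ = 0)).resolve_left h12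
    · linear_combination 3 * ya
    · linear_combination 12 * yb
    · linear_combination 6 * (y - ya - 3 * yb - yd)
    · linear_combination 12 * yd
    · linear_combination 3 * ye
  have hc : c' = 0 := by
    apply hX
    have ya := (sep 1 0 1 0).2.2.1
    have yc := (sep 1 0 0 1).2.2.1
    have ye := (sep 0 1 0 1).2.2.1
    have yb := (sep 1 1 1 0).2.2.1
    have yd := (sep 1 1 0 1).2.2.1
    refine ⟨?_, ?_, ?_, ?_, ?_⟩ <;> apply (mul_eq_zero.mp (?_ : (12 : K) * _ = 0)).resolve_left h12
    · linear_combination 2 * ya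
    · linear_combination 4 * (yb - yc - ya)
    · linear_combination 12 * yc
    · linear_combination 4 * (yd - yc - ye)
    · linear_combination 2 * ye
  subst ha hb hc hd he
  rfl

section poly
open MvPolynomial

lemma sz_count {p : ℕ} [Fact p.Prime] (F : MvPolynomial (Fin 4) (ZMod p)) (hF : F ≠ 0) (d : ℕ)
    (hd : F.totalDegree ≤ d) :
    #{v : Fin 4 → ZMod p | eval v F = 0} * p ≤ d * p ^ 4 := by
  have h := schwartz_zippel_totalDegree hF (Finset.univ : Finset (ZMod p))
  have hp : (0 : ℚ≥0) < p := by exact_mod_cast (Fact.out : p.Prime).pos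
  simp only [Fintype.piFinset_univ, card_univ, ZMod.card] at h
  rw [div_le_div_iff₀ (by positivity) hp] at h
  have h' : #{v : Fin 4 → ZMod p | eval v F = 0} * p ≤ F.totalDegree * p ^ 4 := by
    exact_mod_cast h
  exact h'.trans (by gcongr)

lemma td_add {K : Type*} [Field K] {A B : MvPolynomial (Fin 4) K} {d : ℕ}
    (hA : A.totalDegree ≤ d) (hB : B.totalDegree ≤ d) : (A + B).totalDegree ≤ d :=
  (totalDegree_add _ _).trans (max_le hA hB)
lemma td_sub {K : Type*} [Field K] {A B : MvPolynomial (Fin 4) K} {d : ℕ}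
    (hA : A.totalDegree ≤ d) (hB : B.totalDegree ≤ d) : (A - B).totalDegree ≤ d :=
  (totalDegree_sub _ _).trans (max_le hA hB)
lemma td_C {K : Type*} [Field K] (c : K) (d : ℕ) :
    (C c : MvPolynomial (Fin 4) K).totalDegree ≤ d := by
  simp
lemma td_n {K : Type*} [Field K] (n : ℕ) [n.AtLeastTwo] (d : ℕ) :
    (OfNat.ofNat n : MvPolynomial (Fin 4) K).totalDegree ≤ d := by
  rw [← map_ofNat (C : K →+* MvPolynomial (Fin 4) K) n, totalDegree_C]; exact Nat.zero_le _
lemma td_mC {K : Type*} [Field K] {A : MvPolynomial (Fin 4) K} {d : ℕ} (c : K)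
    (hA : A.totalDegree ≤ d) : (A * C c).totalDegree ≤ d :=
  (totalDegree_mul _ _).trans (by simpa using hA)
lemma td_mXp {K : Type*} [Field K] {A : MvPolynomial (Fin 4) K} {d : ℕ} (i : Fin 4) (k : ℕ)
    (hA : A.totalDegree ≤ d - k) (hk : k ≤ d) : (A * X i ^ k).totalDegree ≤ d :=
  (totalDegree_mul _ _).trans (by rw [totalDegree_X_pow]; omega)
lemma td_mX {K : Type*} [Field K] {A : MvPolynomial (Fin 4) K} {d : ℕ} (i : Fin 4)
    (hA : A.totalDegree ≤ d - 1) (hk : 1 ≤ d) : (A * X i).totalDegree ≤ d :=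
  (totalDegree_mul _ _).trans (by rw [totalDegree_X]; omega)

lemma count_pairing {p : ℕ} [Fact p.Prime] (hp : 5 ≤ p) (f h : BQ (ZMod p))
    (hf : f ≠ ⟨0, 0, 0, 0, 0⟩) (hh : h ≠ ⟨0, 0, 0, 0, 0⟩) :
    #{v : Fin 4 → ZMod p | pairing (f.subst (matOfVec v)) h = 0} * p ≤ 4 * p ^ 4 := by
  let F : MvPolynomial (Fin 4) (ZMod p) := pairing ((f.map C).subst (matOfVec X)) (h.map C)
  have hev : ∀ v, eval v F = pairing (f.subst (matOfVec v)) h := by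
    intro v
    simp [F, pairing, BQ.subst, BQ.map, matOfVec]
  have hF : F ≠ 0 := by
    intro h0
    have h2 : (2 : ZMod p) ≠ 0 := by
      have := (ZMod.natCast_eq_zero_iff 2 p).not.mpr (fun h => by have := Nat.le_of_dvd (by norm_num) h; omega)
      simpa using this
    have h3 : (3 : ZMod p) ≠ 0 := by
      have := (ZMod.natCast_eq_zero_iff 3 p).not.mpr (fun h => by have := Nat.le_of_dvd (by norm_num) h; omega)
      simpa using this
    rcases pairing_nonzero h2 h3 f h (fun a b c d => by
      have := hev ![a, b, c, d]
      rw [h0] at this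
      simpa [matOfVec] using this.symm) with h | h
    · exact hf h
    · exact hh h
  have hd : F.totalDegree ≤ 4 := by
    simp only [F, pairing, BQ.subst, BQ.map, matOfVec]
    repeat' first
      | with_reducible apply td_add
      | with_reducible apply td_mXp
      | with_reducible apply td_mX
      | with_reducible apply td_mC
      | with_reducible exact td_C _ _
      | exact td_n _ _
      | norm_num
  have := sz_count F hF 4 hd
  simpa only [hev] using this

lemma count_det {p : ℕ} [Fact p.Prime] :
    #{v : Fin 4 → ZMod p | (matOfVec v).det = 0} * p ≤ 2 * p ^ 4 := by
  let F : MvPolynomial (Fin 4) (ZMod p) := (matOfVec X).det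
  have hev : ∀ v, eval v F = (matOfVec v).det := by
    intro v
    simp [F, Mat2.det, matOfVec]
  have hF : F ≠ 0 := by
    intro h0
    have := hev ![1, 0, 0, 1]
    rw [h0] at this
    simp [matOfVec, Mat2.det] at this
  have hd : F.totalDegree ≤ 2 := by
    simp only [F, Mat2.det, matOfVec]
    refine td_sub ?_ ?_ <;> exact td_mX _ (by simp) (by norm_num)
  have := sz_count F hF 2 hd
  simpa only [hev] using this

end poly

lemma lift_count {p k : ℕ} [Fact p.Prime] (P : (Fin 4 → ZMod p) → Prop)
    [DecidablePred P] (d : ℕ) (φ : ZMod (p ^ k) →+* ZMod p)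
    (hP : #{v | P v} * p ≤ d * p ^ 4) :
    #{v : Fin 4 → ZMod (p ^ k) | P (fun i => φ (v i))} * p ≤ d * (p ^ k) ^ 4 := by
  classical
  let Φ : (Fin 4 → ZMod (p ^ k)) →+ (Fin 4 → ZMod p) := φ.toAddMonoidHom.compLeft (Fin 4)
  have hsurj : Function.Surjective Φ := by
    intro w
    choose g hg using (ZMod.ringHom_surjective φ)
    exact ⟨fun i => g (w i), by ext i; simp [Φ, hg]⟩
  have hfib : ∀ w, #{v | Φ v = w} = #{v | Φ v = 0} := fun w =>
    AddMonoidHom.card_fiber_eq_of_mem_range Φ (hsurj w) (hsurj 0)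
  have htot : (p ^ k) ^ 4 = p ^ 4 * #{v | Φ v = 0} := by
    have := card_eq_sum_card_fiberwise (s := (univ : Finset (Fin 4 → ZMod (p ^ k)))) (f := Φ)
      (t := univ) (by intro x; simp)
    simp only [hfib] at this
    simpa using this
  have hc : #{v : Fin 4 → ZMod (p ^ k) | P (fun i => φ (v i))} = #{v | P v} * #{v | Φ v = 0} := by
    have := card_eq_sum_card_fiberwise (s := ({v : Fin 4 → ZMod (p ^ k) | P (fun i => φ (v i))} : Finset _)) (f := Φ)
      (t := ({v | P v} : Finset _)) (by intro x; simp [Φ]; exact id)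
    rw [this, ← smul_eq_mul, ← sum_const]
    apply sum_congr rfl
    intro w hw
    rw [← hfib w]
    congr 1
    ext v
    simp only [mem_filter, mem_univ, true_and] at hw ⊢
    constructor
    · exact fun h => h.2
    · intro h
      refine ⟨?_, h⟩
      rw [← h] at hw
      exact hw
  rw [hc, htot]
  nlinarith [Nat.mul_le_mul_right (#{v | Φ v = 0}) hP]

section arith
variable {p k : ℕ} [hpf : Fact p.Prime]

lemma phi_eq_zero_iff (φ : ZMod (p ^ k) →+* ZMod p) (x : ZMod (p ^ k)) :
    φ x = 0 ↔ p ∣ x.val := by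
  have : NeZero (p ^ k) := ⟨pow_ne_zero _ hpf.out.ne_zero⟩
  conv_lhs => rw [← ZMod.natCast_zmod_val x, map_natCast]
  exact ZMod.natCast_eq_zero_iff _ _

lemma phi_eq_zero_iff' (φ : ZMod (p ^ k) →+* ZMod p) (x : ZMod (p ^ k)) :
    φ x = 0 ↔ ∃ y, x = (p : ZMod (p ^ k)) * y := by
  have : NeZero (p ^ k) := ⟨pow_ne_zero _ hpf.out.ne_zero⟩
  constructor
  · rw [phi_eq_zero_iff]
    rintro ⟨c, hc⟩
    refine ⟨c, ?_⟩
    rw [← ZMod.natCast_zmod_val x, hc]; simp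
  · rintro ⟨y, rfl⟩
    simp

lemma isUnit_iff_phi (hk : 1 ≤ k) (φ : ZMod (p ^ k) →+* ZMod p) (x : ZMod (p ^ k)) :
    IsUnit x ↔ φ x ≠ 0 := by
  have : NeZero (p ^ k) := ⟨pow_ne_zero _ hpf.out.ne_zero⟩
  rw [Ne, phi_eq_zero_iff]
  conv_lhs => rw [← ZMod.natCast_zmod_val x]
  rw [ZMod.isUnit_iff_coprime, Nat.coprime_pow_right_iff (by omega), Nat.coprime_comm,
    hpf.out.coprime_iff_not_dvd]

lemma pow_mul_eq_zero_iff (hk : 1 ≤ k) (φ : ZMod (p ^ k) →+* ZMod p) (x : ZMod (p ^ k)) :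
    (p : ZMod (p ^ k)) ^ (k - 1) * x = 0 ↔ φ x = 0 := by
  have : NeZero (p ^ k) := ⟨pow_ne_zero _ hpf.out.ne_zero⟩
  rw [phi_eq_zero_iff]
  conv_lhs => rw [← ZMod.natCast_zmod_val x]
  obtain ⟨l, rfl⟩ : ∃ l, k = l + 1 := ⟨k - 1, by omega⟩
  rw [← Nat.cast_pow, ← Nat.cast_mul, ZMod.natCast_eq_zero_iff, Nat.add_sub_cancel]
  have e : ∀ y : ℕ, p ^ (l + 1) ∣ p ^ l * y ↔ p ∣ y := fun y => by
    rw [pow_succ]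
    exact Nat.mul_dvd_mul_iff_left (pow_pos hpf.out.pos _)
  exact e _

lemma sum_units_eq {R : Type*} [CommRing R] [Fintype R] [DecidableEq R] {M : Type*}
    [AddCommMonoid M] (F : R → M) [DecidablePred (IsUnit : R → Prop)] :
    ∑ t : Rˣ, F t = ∑ x with IsUnit x, F x := by
  have : ({x | IsUnit x} : Finset R) = univ.image (fun t : Rˣ => (t : R)) := by
    ext x
    simp only [mem_filter, mem_univ, true_and, mem_image]
    rfl
  rw [this, sum_image]
  intro a _ b _ h
  exact Units.ext h

lemma sum_zero_lemma [NeZero (p ^ k)] (j : ℕ) (hj : j + 2 ≤ k) (hp : 3 ≤ p)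
    (φ : ZMod (p ^ k) →+* ZMod p)
    (m : ZMod (p ^ k)) (hm : φ m ≠ 0) :
    ∑ t : (ZMod (p ^ k))ˣ,
      (ZMod.stdAddChar ((t : ZMod (p ^ k)) ^ 2 * ((p : ZMod (p ^ k)) ^ j * m)) : ℂ) = 0 := by
  obtain ⟨l, hl⟩ := Nat.exists_eq_add_of_le hj
  have hk : 1 ≤ k := by omega
  set S := ∑ t : (ZMod (p ^ k))ˣ, (ZMod.stdAddChar ((t : ZMod (p ^ k)) ^ 2 * ((p : ZMod (p ^ k)) ^ j * m)) : ℂ)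
    with hS
  have hpk : (p : ZMod (p ^ k)) ^ (j + 2 + l) = 0 := by
    rw [← Nat.cast_pow, ← hl, ZMod.natCast_self]
  have h2 : (2 : ZMod p) ≠ 0 := by
    have := (ZMod.natCast_eq_zero_iff 2 p).not.mpr
      (fun h => by have := Nat.le_of_dvd (by norm_num) h; omega)
    simpa using this
  have hu : ∀ s : ZMod (p ^ k), IsUnit (1 + (p : ZMod (p ^ k)) ^ (l + 1) * s) := by
    intro s
    rw [isUnit_iff_phi hk φ]
    simp
  have h1 : ∀ s : ZMod (p ^ k), S = ∑ t : (ZMod (p ^ k))ˣ,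
      (ZMod.stdAddChar ((t : ZMod (p ^ k)) ^ 2 * ((p : ZMod (p ^ k)) ^ j * m)) : ℂ) *
        ZMod.stdAddChar (s * ((p : ZMod (p ^ k)) ^ (k - 1) * (2 * (t : ZMod (p ^ k)) ^ 2 * m))) := by
    intro s
    rw [hS, ← Equiv.sum_comp (Equiv.mulRight (hu s).unit)]
    apply sum_congr rfl
    intro t _
    rw [← AddChar.map_add_eq_mul]
    congr 1
    simp only [Equiv.coe_mulRight, Units.val_mul, IsUnit.unit_spec]
    have e : k - 1 = j + 1 + l := by omega
    rw [e]
    linear_combination ((t : ZMod (p ^ k)) ^ 2 * s ^ 2 * m * (p : ZMod (p ^ k)) ^ l) * hpk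
  have h3 : ∑ _s : ZMod (p ^ k), S = 0 := by
    rw [sum_congr rfl (fun s _ => h1 s), sum_comm]
    apply sum_eq_zero
    intro t _
    rw [← mul_sum, AddChar.sum_mulShift _ (ZMod.isPrimitive_stdAddChar (p ^ k)), if_neg, Nat.cast_zero,
      mul_zero]
    rw [pow_mul_eq_zero_iff hk φ]
    have ht : φ t ≠ 0 := (isUnit_iff_phi hk φ _).mp t.isUnit
    rw [map_mul, map_mul, map_pow, show φ 2 = 2 from map_ofNat φ 2]
    simp [h2, hm, ht]
  rw [sum_const, card_univ, ZMod.card, nsmul_eq_mul] at h3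
  exact (mul_eq_zero.mp h3).resolve_left (by exact_mod_cast NeZero.ne (p ^ k))

open scoped Classical in
lemma card_units_add [NeZero (p ^ k)] (hk : 1 ≤ k) (φ : ZMod (p ^ k) →+* ZMod p) :
    #{x : ZMod (p ^ k) | φ x = 0} = p ^ (k - 1) ∧
    Fintype.card (ZMod (p ^ k))ˣ + p ^ (k - 1) = p ^ k := by
  have h1 : Fintype.card (ZMod (p ^ k))ˣ = p ^ (k - 1) * (p - 1) := by
    rw [ZMod.card_units_eq_totient, Nat.totient_prime_pow hpf.out (by omega)]
  have h3 : Fintype.card (ZMod (p ^ k))ˣ + p ^ (k - 1) = p ^ k := by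
    rw [h1]
    obtain ⟨l, rfl⟩ : ∃ l, k = l + 1 := ⟨k - 1, by omega⟩
    obtain ⟨q, hq⟩ : ∃ q, p = q + 1 := ⟨p - 1, by have := hpf.out.pos; omega⟩
    subst hq
    simp only [Nat.add_sub_cancel]
    ring
  refine ⟨?_, h3⟩
  have h2 := sum_units_eq (R := ZMod (p ^ k)) (fun _ => (1 : ℕ))
  simp only [sum_const, card_univ, smul_eq_mul, mul_one] at h2
  have h4 := card_filter_add_card_filter_not (s := (univ : Finset (ZMod (p ^ k))))
    (fun x => φ x = 0)
  simp only [isUnit_iff_phi hk φ] at h2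
  rw [card_univ, ZMod.card] at h4
  simp only [ne_eq] at h2
  omega

lemma gauss_lemma [NeZero (p ^ k)] (hk : 1 ≤ k) (hp : 3 ≤ p)
    (φ : ZMod (p ^ k) →+* ZMod p)
    (m : ZMod (p ^ k)) (hm : φ m ≠ 0) :
    ‖∑ t : (ZMod (p ^ k))ˣ,
      (ZMod.stdAddChar ((t : ZMod (p ^ k)) ^ 2 * ((p : ZMod (p ^ k)) ^ (k - 1) * m)) : ℂ)‖
      ≤ 4 * (p : ℝ) ^ (-(1 : ℝ) / 2) * Fintype.card (ZMod (p ^ k))ˣ := by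
  classical
  obtain ⟨hc1, hc2⟩ := card_units_add hk φ
  set c : ZMod (p ^ k) := (p : ZMod (p ^ k)) ^ (k - 1) * m with hc
  have h2 : (2 : ZMod p) ≠ 0 := by
    have := (ZMod.natCast_eq_zero_iff 2 p).not.mpr
      (fun h => by have := Nat.le_of_dvd (by norm_num) h; omega)
    simpa using this
  set S : ℂ := ∑ x : ZMod (p ^ k), ZMod.stdAddChar (x ^ 2 * c) with hS
  have hsplit : ∑ t : (ZMod (p ^ k))ˣ, (ZMod.stdAddChar ((t : ZMod (p ^ k)) ^ 2 * c) : ℂ)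
      = S - (p : ℂ) ^ (k - 1) := by
    rw [sum_units_eq (fun x : ZMod (p ^ k) => (ZMod.stdAddChar (x ^ 2 * c) : ℂ)), eq_sub_iff_add_eq]
    have h4 := sum_filter_add_sum_filter_not (univ : Finset (ZMod (p ^ k))) (fun x => φ x = 0)
      (fun x => (ZMod.stdAddChar (x ^ 2 * c) : ℂ))
    have h5 : ∑ x with φ x = 0, (ZMod.stdAddChar (x ^ 2 * c) : ℂ) = (p : ℂ) ^ (k - 1) := by
      rw [sum_congr rfl (g := fun _ => (1 : ℂ)), sum_const, hc1]
      · simp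
      · intro x hx
        have : x ^ 2 * c = 0 := by
          rw [hc, mul_left_comm, pow_mul_eq_zero_iff hk φ]
          simp at hx
          simp [hx]
        rw [this, AddChar.map_zero_eq_one]
    rw [h5] at h4
    simp only [isUnit_iff_phi hk φ]
    rw [hS, ← h4, add_comm]
  have hS2 : S * (starRingEnd ℂ) S = ∑ d : ZMod (p ^ k), (ZMod.stdAddChar (d ^ 2 * c) : ℂ) *
      ∑ s : ZMod (p ^ k), ZMod.stdAddChar (s * (2 * d * c)) := by
    rw [hS, map_sum, sum_mul_sum, sum_comm]
    simp_rw [mul_sum]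
    rw [sum_comm (s := (univ : Finset (ZMod (p ^ k)))) (t := univ)
      (f := fun d s => (ZMod.stdAddChar (d ^ 2 * c) : ℂ) * ZMod.stdAddChar (s * (2 * d * c)))]
    apply sum_congr rfl
    intro s _
    rw [← Equiv.sum_comp (Equiv.addRight s)]
    apply sum_congr rfl
    intro d _
    rw [← AddChar.map_neg_eq_conj, ← AddChar.map_add_eq_mul, ← AddChar.map_add_eq_mul]
    congr 1
    simp only [Equiv.coe_addRight]
    ring
  have hn : ‖S‖ ^ 2 ≤ (p : ℝ) ^ (k - 1) * (p : ℝ) ^ k := by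
    have : ‖S * (starRingEnd ℂ) S‖ = ‖S‖ ^ 2 := by rw [norm_mul, RCLike.norm_conj]; ring
    rw [← this, hS2]
    refine (norm_sum_le _ _).trans ?_
    have : ∀ d : ZMod (p ^ k), ‖(ZMod.stdAddChar (d ^ 2 * c) : ℂ) *
      ∑ s : ZMod (p ^ k), (ZMod.stdAddChar (s * (2 * d * c)) : ℂ)‖ = if φ d = 0 then (p : ℝ) ^ k else 0 := by
      intro d
      rw [norm_mul, norm_std, AddChar.sum_mulShift _ (ZMod.isPrimitive_stdAddChar (p ^ k)), one_mul]
      have : 2 * d * c = 0 ↔ φ d = 0 := by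
        rw [hc, mul_left_comm, pow_mul_eq_zero_iff hk φ]
        rw [map_mul, map_mul, show φ 2 = 2 from map_ofNat φ 2]
        simp [h2, hm]
      simp only [this, ZMod.card]
      split_ifs <;> simp
    rw [sum_congr rfl (fun d _ => this d), ← sum_filter, sum_const, hc1]
    simp
  have hp0 : (0 : ℝ) < p := by exact_mod_cast hpf.out.pos
  set r : ℝ := (p : ℝ) ^ (-(1 : ℝ) / 2) with hr
  have hr0 : 0 < r := Real.rpow_pos_of_pos hp0 _
  have hr2 : r ^ 2 * p = 1 := by
    rw [hr, ← Real.rpow_natCast, ← Real.rpow_mul hp0.le]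
    norm_num [Real.rpow_neg_one]
    try field_simp
  have hpk : (p : ℝ) ^ k = p ^ (k - 1) * p := by
    rw [← pow_succ]; congr 1; omega
  set Q : ℝ := (p : ℝ) ^ (k - 1) with hQ
  have hQ0 : 0 < Q := by positivity
  have hp3 : (3 : ℝ) ≤ p := by exact_mod_cast hp
  have hc2' : (Fintype.card (ZMod (p ^ k))ˣ : ℝ) = Q * p - Q := by
    rw [← hpk, eq_sub_iff_add_eq]
    rw [hQ]
    exact_mod_cast hc2
  have hSn : ‖S‖ ≤ Q * p * r := by
    apply le_of_sq_le_sq _ (by positivity)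
    calc ‖S‖ ^ 2 ≤ Q * (Q * p) := by rw [hpk] at hn; exact hn
      _ = (Q * p * r) ^ 2 := by linear_combination (-(Q ^ 2 * p)) * hr2
  have hr1 : r ≤ 1 := by
    by_contra h
    push Not at h
    nlinarith
  have hrp : 1 ≤ p * r := by nlinarith
  rw [hsplit]
  calc ‖S - (p : ℂ) ^ (k - 1)‖ ≤ ‖S‖ + ‖(p : ℂ) ^ (k - 1)‖ := norm_sub_le _ _
    _ ≤ Q * p * r + Q := by
      gcongr
      simp [hQ]
    _ ≤ 4 * r * (Q * p - Q) := by
      have : p * r + 1 ≤ 4 * r * (p - 1) := by nlinarith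
      nlinarith
    _ = _ := by rw [hc2']

end arith

section main
variable {p k : ℕ} [hpf : Fact p.Prime]

open scoped Classical in
lemma numGL_eq (n : ℕ) [NeZero n] :
    numGL n = #{v : Fin 4 → ZMod n | IsUnit (matOfVec v).det} := by
  let e : {m : Mat2 (ZMod n) // IsUnit m.det} ≃
      {v : Fin 4 → ZMod n // IsUnit (matOfVec v).det} :=
    { toFun := fun m => ⟨![m.1.p, m.1.q, m.1.r, m.1.s], m.2⟩
      invFun := fun v => ⟨matOfVec v.1, v.2⟩
      left_inv := fun m => rfl
      right_inv := fun v => by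
        apply Subtype.ext
        ext i
        fin_cases i <;> rfl }
  rw [numGL, Nat.card_congr e, Nat.card_eq_fintype_card, Fintype.card_subtype]

open scoped Classical in
lemma orb_bound (n : ℕ) [NeZero n] (f h : BQ (ZMod n)) (E : ℝ)
    (hG : 0 < numGL n)
    (H : ∑ v : Fin 4 → ZMod n, (if IsUnit (matOfVec v).det then
        ‖∑ t : (ZMod n)ˣ, (ZMod.stdAddChar
          (((t : ZMod n) ^ 2) * pairing (f.twist (matOfVec v)) h) : ℂ)‖ else 0)
        ≤ E * (Fintype.card (ZMod n)ˣ * numGL n)) :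
    ‖orbSum n f h‖ ≤ E := by
  have hU : (0 : ℝ) < Fintype.card (ZMod n)ˣ * numGL n := by
    have : 0 < Fintype.card (ZMod n)ˣ := Fintype.card_pos
    positivity
  rw [orbSum, norm_mul, norm_inv, norm_mul, Complex.norm_natCast, Complex.norm_natCast,
    Nat.card_eq_fintype_card, inv_mul_le_iff₀ hU, mul_comm]
  refine le_trans ?_ H
  simp only [tsum_fintype]
  rw [sum_comm]
  refine (norm_sum_le _ _).trans (sum_le_sum fun v _ => ?_)
  split_ifs
  · simp only [eChar_eq]; exact le_rfl
  · simp

lemma numGL_pos (n : ℕ) [NeZero n] : 0 < numGL n := by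
  classical
  rw [numGL_eq, card_pos]
  exact ⟨![1, 0, 0, 1], by
    rw [mem_filter]
    exact ⟨mem_univ _, by simp [matOfVec, Mat2.det]⟩⟩

lemma sum_le_card (n : ℕ) [NeZero n] (m : ZMod n) :
    ‖∑ t : (ZMod n)ˣ, (ZMod.stdAddChar (((t : ZMod n) ^ 2) * m) : ℂ)‖
      ≤ Fintype.card (ZMod n)ˣ := by
  refine (norm_sum_le _ _).trans ?_
  simp [norm_std]

lemma orb_le_one (n : ℕ) [NeZero n] (f h : BQ (ZMod n)) : ‖orbSum n f h‖ ≤ 1 := by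
  classical
  refine orb_bound n f h 1 (numGL_pos n) ?_
  rw [← sum_filter, one_mul, numGL_eq, mul_comm, ← nsmul_eq_mul]
  exact sum_le_card_nsmul _ _ _ fun v _ => sum_le_card n _

lemma numGL_lower [NeZero (p ^ k)] (hk : 1 ≤ k) (hp : 5 ≤ p) (φ : ZMod (p ^ k) →+* ZMod p) :
    3 * (p ^ k) ^ 4 ≤ 5 * numGL (p ^ k) := by
  classical
  have h := lift_count (fun v : Fin 4 → ZMod p => (matOfVec v).det = 0) 2 φ count_det
  have h4 := card_filter_add_card_filter_not (s := (univ : Finset (Fin 4 → ZMod (p ^ k))))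
    (fun v => IsUnit (matOfVec v).det)
  rw [← numGL_eq] at h4
  have e : ∀ v : Fin 4 → ZMod (p ^ k), ¬ IsUnit (matOfVec v).det ↔
      (matOfVec (fun i => φ (v i))).det = 0 := by
    intro v
    rw [isUnit_iff_phi hk φ]
    simp [matOfVec, Mat2.det]
  simp only [e] at h4
  simp only [card_univ, Fintype.card_fun, ZMod.card, Fintype.card_fin] at h4
  nlinarith

lemma main_bound [NeZero (p ^ k)] (hk : 1 ≤ k) (hp : 5 ≤ p) (φ : ZMod (p ^ k) →+* ZMod p)
    (f h h' : BQ (ZMod (p ^ k))) (j : ℕ) (hh : h = h'.rsmul ((p : ZMod (p ^ k)) ^ j))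
    (hf : f.map φ ≠ ⟨0, 0, 0, 0, 0⟩) (hh' : h'.map φ ≠ ⟨0, 0, 0, 0, 0⟩) (B : ℝ) (hB : 0 ≤ B)
    (H : ∀ m : ZMod (p ^ k), φ m ≠ 0 → ‖∑ t : (ZMod (p ^ k))ˣ,
      (ZMod.stdAddChar ((t : ZMod (p ^ k)) ^ 2 * ((p : ZMod (p ^ k)) ^ j * m)) : ℂ)‖
      ≤ B * Fintype.card (ZMod (p ^ k))ˣ) :
    ‖orbSum (p ^ k) f h‖ ≤ B + 7 * (p : ℝ) ^ (-(1 : ℝ)) := by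
  classical
  have hc := lift_count (fun v : Fin 4 → ZMod p => pairing ((f.map φ).subst (matOfVec v)) (h'.map φ) = 0)
    4 φ (count_pairing hp _ _ hf hh')
  have hl := numGL_lower hk hp φ
  have hp0 : (0 : ℝ) < p := by exact_mod_cast hpf.out.pos
  refine orb_bound _ f h _ (numGL_pos _) ?_
  set U : ℝ := (Fintype.card (ZMod (p ^ k))ˣ : ℝ) with hU
  have hU0 : 0 ≤ U := by positivity
  set bad := #{v : Fin 4 → ZMod (p ^ k) |
    pairing ((f.map φ).subst (matOfVec (fun i => φ (v i)))) (h'.map φ) = 0} with hbad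
  have step : ∑ v : Fin 4 → ZMod (p ^ k), (if IsUnit (matOfVec v).det then
        ‖∑ t : (ZMod (p ^ k))ˣ, (ZMod.stdAddChar
          (((t : ZMod (p ^ k)) ^ 2) * pairing (f.twist (matOfVec v)) h) : ℂ)‖ else 0)
      ≤ ∑ v : Fin 4 → ZMod (p ^ k), ((if IsUnit (matOfVec v).det then B * U else 0) +
        if pairing ((f.map φ).subst (matOfVec (fun i => φ (v i)))) (h'.map φ) = 0 then U else 0) := by
    apply sum_le_sum
    intro v _
    by_cases hdet : IsUnit (matOfVec v).det
    swap
    · simp only [hdet, if_false, zero_add]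
      split_ifs <;> simp [hU0]
    simp only [hdet, if_true]
    split_ifs with hz
    · refine (sum_le_card _ _).trans ?_
      have : 0 ≤ B * U := by positivity
      linarith
    · rw [add_zero]
      have e : pairing (f.twist (matOfVec v)) h = (p : ZMod (p ^ k)) ^ j *
          (Ring.inverse (matOfVec v).det ^ 2 * pairing (f.subst (matOfVec v)) h') := by
        rw [hh]
        simp only [BQ.twist, BQ.rsmul, pairing]
        ring
      rw [e]
      apply H
      have hu : φ (Ring.inverse (matOfVec v).det) ≠ 0 :=
        (isUnit_iff_phi hk φ _).mp hdet.ringInverse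
      rw [map_mul, map_pow]
      refine mul_ne_zero (pow_ne_zero _ hu) ?_
      convert hz using 1
      have e2 : φ 2 = 2 := map_ofNat φ 2
      have e3 : φ 3 = 3 := map_ofNat φ 3
      have e4 : φ 4 = 4 := map_ofNat φ 4
      have e6 : φ 6 = 6 := map_ofNat φ 6
      simp only [pairing, BQ.subst, BQ.map, matOfVec, map_add, map_mul, map_pow, e2, e3, e4, e6]
  refine step.trans ?_
  rw [sum_add_distrib, ← sum_filter, ← sum_filter, sum_const, sum_const, ← numGL_eq, ← hbad,
    nsmul_eq_mul, nsmul_eq_mul, Real.rpow_neg_one]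
  have hb : (bad : ℝ) ≤ 7 * (p : ℝ)⁻¹ * numGL (p ^ k) := by
    have h1 : (bad : ℝ) * p ≤ 7 * numGL (p ^ k) := by
      have : bad * p ≤ 7 * numGL (p ^ k) := by nlinarith
      exact_mod_cast this
    have h2 := mul_le_mul_of_nonneg_right h1 (inv_nonneg.mpr hp0.le)
    rw [mul_assoc, mul_inv_cancel₀ hp0.ne'] at h2
    linarith
  have := mul_le_mul_of_nonneg_right hb hU0
  nlinarith

lemma not_mult (hk : 1 ≤ k) (φ : ZMod (p ^ k) →+* ZMod p) (f : BQ (ZMod (p ^ k)))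
    (hf : ¬ ∃ g : BQ (ZMod (p ^ k)), f = g.rsmul (p : ZMod (p ^ k))) :
    f.map φ ≠ ⟨0, 0, 0, 0, 0⟩ := by
  intro h0
  apply hf
  simp only [BQ.map, BQ.mk.injEq, phi_eq_zero_iff'] at h0
  obtain ⟨⟨a, ha⟩, ⟨b, hb⟩, ⟨c, hc⟩, ⟨d, hd⟩, ⟨e, he⟩⟩ := h0
  refine ⟨⟨a, b, c, d, e⟩, ?_⟩
  cases f
  simp_all [BQ.rsmul]

end main

/-- Uniform bounds for orbital exponential sums on `V(ℤ/p^kℤ)`,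
for `f` not a multiple of `p`:  `G ≪ 1` always, `G ≪ p^{−1/2}` for
`0 ≠ h ∈ p^{k−1}V`, and `G ≪ p^{−1}` for `h ∉ p^{k−1}V`. -/
theorem orbital_sum_bounds :
    ∃ C : ℝ, 0 < C ∧
      ∀ (p : ℕ), p.Prime → ∀ (k : ℕ), 1 ≤ k → ∀ f h : BQ (ZMod (p ^ k)),
        (¬ ∃ g : BQ (ZMod (p ^ k)), f = g.rsmul (p : ZMod (p ^ k))) →
        (‖orbSum (p ^ k) f h‖ ≤ C) ∧
        (h ≠ ⟨0, 0, 0, 0, 0⟩ →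
          (∃ h' : BQ (ZMod (p ^ k)), h = h'.rsmul ((p : ZMod (p ^ k)) ^ (k - 1))) →
          ‖orbSum (p ^ k) f h‖ ≤ C * (p : ℝ) ^ (-(1 : ℝ) / 2)) ∧
        ((¬ ∃ h' : BQ (ZMod (p ^ k)), h = h'.rsmul ((p : ZMod (p ^ k)) ^ (k - 1))) →
          ‖orbSum (p ^ k) f h‖ ≤ C * (p : ℝ) ^ (-(1 : ℝ))) := by

  refine ⟨20, by norm_num, ?_⟩
  intro p hp k hk f h hf
  have : Fact p.Prime := ⟨hp⟩
  have : NeZero (p ^ k) := ⟨pow_ne_zero _ hp.ne_zero⟩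
  have h1 := orb_le_one (p ^ k) f h
  have hp0 : (0 : ℝ) < p := by exact_mod_cast hp.pos
  have hp1 : (1 : ℝ) ≤ p := by exact_mod_cast hp.one_lt.le
  have hcmp : (p : ℝ) ^ (-(1 : ℝ)) ≤ (p : ℝ) ^ (-(1 : ℝ) / 2) :=
    Real.rpow_le_rpow_of_exponent_le hp1 (by norm_num)
  have hpos : (0 : ℝ) < (p : ℝ) ^ (-(1 : ℝ)) := Real.rpow_pos_of_pos hp0 _
  by_cases hp5 : p < 5
  · have h5 : (p : ℝ) ≤ 5 := by exact_mod_cast hp5.le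
    have : 1 ≤ 20 * (p : ℝ) ^ (-(1 : ℝ)) := by
      rw [Real.rpow_neg_one, ← div_eq_mul_inv, le_div_iff₀ hp0]
      linarith
    refine ⟨by linarith, fun _ _ => by linarith, fun _ => by linarith⟩
  push Not at hp5
  let φ : ZMod (p ^ k) →+* ZMod p := ZMod.castHom (dvd_pow_self p (by omega)) (ZMod p)
  have hf' := not_mult hk φ f hf
  refine ⟨by linarith, ?_, ?_⟩
  · rintro hne ⟨h', hh'⟩
    have hm : h'.map φ ≠ ⟨0, 0, 0, 0, 0⟩ := by
      intro h0
      apply hne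
      simp only [BQ.map, BQ.mk.injEq, ← pow_mul_eq_zero_iff hk φ] at h0
      rw [hh', BQ.rsmul]
      simp [h0]
    have := main_bound hk hp5 φ f h h' (k - 1) hh' hf' hm (4 * (p : ℝ) ^ (-(1 : ℝ) / 2))
      (by linarith) (fun m hm => gauss_lemma hk (by omega) φ m hm)
    linarith
  · intro hno
    have hex : ∃ j, ¬ ∃ h' : BQ (ZMod (p ^ k)), h = h'.rsmul ((p : ZMod (p ^ k)) ^ j) := ⟨_, hno⟩
    classical
    have hmin := fun m => Nat.find_min hex (m := m)
    have hle : Nat.find hex ≤ k - 1 := Nat.find_min' hex hno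
    have hspec := Nat.find_spec hex
    generalize Nat.find hex = j0 at *
    have hj0 : j0 ≠ 0 := by
      rintro rfl
      apply hspec
      refine ⟨h, ?_⟩
      cases h
      simp [BQ.rsmul]
    obtain ⟨j, rfl⟩ := Nat.exists_eq_succ_of_ne_zero hj0
    obtain ⟨h', hh'⟩ := not_not.mp (hmin j (Nat.lt_succ_self j))
    have hm := not_mult hk φ h' (by
      rintro ⟨g, hg⟩
      apply hspec
      refine ⟨g, ?_⟩
      rw [hh', hg]
      simp only [BQ.rsmul, BQ.mk.injEq, Nat.succ_eq_add_one]
      refine ⟨?_, ?_, ?_, ?_, ?_⟩ <;> ring)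
    have := main_bound hk hp5 φ f h h' j hh' hf' hm 0 le_rfl (fun m hm => by
      rw [sum_zero_lemma j (by omega) (by omega) φ m hm]; simp)
    linarith

end BQPaper
end
end
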